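/- arXiv:2311.06611 — 2 statements merged into one kernel-verified Lean document; each statement's English description precedes it below -/
import Mathlib

section
/- Let G=(V,E,I,{s,t}) be a grapht with terminal set {s,t}. Suppose 𝒫 is a linkage of s with |δ_G(t)∖E(𝒫)|=1, and there is no linkage 𝒫' of s with δ_{𝒫'}(t) ⊊ δ_{𝒫}(t) (where δ_{𝒬}(t) denotes the set of edges of δ_G(t) used by the paths of 𝒬). Then |δ_G(t)∖E(𝒬)| ≤ 1 holds for every linkage 𝒬 of s. -/
/-! Common definitions: graphts (multigraphs with terminals), walks, paths, cycles,
edge cuts, inner Eulerian graphts, path systems, linkages, Erdős–Menger cuts,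
restriction (edge deletion) and contraction. -/

universe u v

/-- A *grapht*: a multigraph (no loops, parallel edges allowed) given by an incidence
function `I : E → Sym2 V`, together with a set `T` of at least two terminal vertices. -/
structure Grapht (V : Type u) (E : Type v) where
  I : E → Sym2 V
  loopless : ∀ e : E, ¬ (I e).IsDiag
  T : Set V
  T_nontrivial : T.Nontrivial

namespace Grapht

variable {V : Type u} {E : Type v}

/-- `G.IsWalk vs es` holds when `vs` is the vertex sequence and `es` the edge sequence
of a walk in `G`. -/
inductive IsWalk (G : Grapht V E) : List V → List E → Prop
  | nil (v : V) : IsWalk G [v] []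
  | cons {u w : V} {vs : List V} {e : E} {es : List E} :
      G.I e = s(u, w) → IsWalk G (w :: vs) es → IsWalk G (u :: w :: vs) (e :: es)

/-- A finite path in the grapht `G` (no repeated vertices), with endpoints `first`, `last`. -/
structure Path (G : Grapht V E) where
  first : V
  last : V
  verts : List V
  edges : List E
  isWalk : G.IsWalk verts edges
  nodup : verts.Nodup
  head_eq : verts.head? = some first
  getLast_eq : verts.getLast? = some last

/-- A finite cycle in the grapht `G`. -/
structure Cycle (G : Grapht V E) where
  verts : List V
  edges : List E
  isWalk : G.IsWalk verts edges
  closed : verts.head? = verts.getLast?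
  nontrivial : edges ≠ []
  edges_nodup : edges.Nodup
  tail_nodup : verts.tail.Nodup

variable {G : Grapht V E}

/-- The internal (inner) vertices of a path. -/
def Path.inner (P : G.Path) : List V := (P.verts.drop 1).dropLast

/-- The edge set of a path. -/
def Path.edgeSet (P : G.Path) : Set E := {e | e ∈ P.edges}

/-- The edge set of a cycle. -/
def Cycle.edgeSet (C : G.Cycle) : Set E := {e | e ∈ C.edges}

variable (G)

/-- `δ_G(X)`: the set of edges with exactly one endpoint in `X`. -/
def edgeCut (X : Set V) : Set E :=
  {e | ∃ u w, G.I e = s(u, w) ∧ u ∈ X ∧ w ∉ X}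

/-- A grapht is *inner Eulerian* if there is no `X ⊆ V ∖ T` whose cut `δ(X)` is a
finite set of odd size. -/
def InnerEulerian : Prop :=
  ∀ X : Set V, Disjoint X G.T → ¬ ((G.edgeCut X).Finite ∧ Odd (G.edgeCut X).ncard)

/-- An `AB`-path: a path with first vertex in `A`, last vertex in `B` and no internal
vertex in `A ∪ B`. -/
def IsABPath (A B : Set V) (P : G.Path) : Prop :=
  P.first ∈ A ∧ P.last ∈ B ∧ ∀ v ∈ P.inner, v ∉ A ∪ B

/-- A `T`-path: a path between two distinct terminal vertices without internal
terminal vertices. -/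
def IsTPath (P : G.Path) : Prop :=
  P.first ∈ G.T ∧ P.last ∈ G.T ∧ P.first ≠ P.last ∧ ∀ v ∈ P.inner, v ∉ G.T

/-- A system of pairwise edge-disjoint paths. -/
def EdgeDisjoint (Ps : Set G.Path) : Prop :=
  Ps.Pairwise fun P Q => ∀ e, e ∈ P.edges → e ∉ Q.edges

/-- A system of pairwise edge-disjoint `T`-paths. -/
def IsTPathSystem (Ps : Set G.Path) : Prop :=
  G.EdgeDisjoint Ps ∧ ∀ P ∈ Ps, G.IsTPath P

/-- The set of edges used by a path system. -/
def sysEdges (Ps : Set G.Path) : Set E := ⋃ P ∈ Ps, P.edgeSet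

/-- `C` is *orthogonal* to the path system `Ps`: `C` consists of exactly one edge from
each path of `Ps`. -/
def Orthogonal (C : Set E) (Ps : Set G.Path) : Prop :=
  (∀ P ∈ Ps, ∃! e, e ∈ C ∧ e ∈ P.edges) ∧ ∀ e ∈ C, ∃ P ∈ Ps, e ∈ P.edges

/-- `C` separates `A` and `B`: every `AB`-path meets `C` (i.e. `G − C` has no `AB`-path). -/
def Separates (C : Set E) (A B : Set V) : Prop :=
  ∀ P : G.Path, G.IsABPath A B P → ∃ e ∈ C, e ∈ P.edges

/-- An `AB`-cut. -/
def IsABCut (A B : Set V) (C : Set E) : Prop :=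
  ∀ P : G.Path, G.IsABPath A B P → ∃ e ∈ C, e ∈ P.edges

/-- An Erdős–Menger `AB`-cut: an `AB`-cut orthogonal to some system of pairwise
edge-disjoint `AB`-paths. -/
def IsEMABCut (A B : Set V) (C : Set E) : Prop :=
  G.IsABCut A B C ∧
    ∃ Ps : Set G.Path, G.EdgeDisjoint Ps ∧ (∀ P ∈ Ps, G.IsABPath A B P) ∧ G.Orthogonal C Ps

/-- The order `⊴` on (Erdős–Menger) `AB`-cuts: on every `AB`-path the first edge of `C`
comes no later than the first edge of `C'`. -/
def ABCutLE (A B : Set V) (C C' : Set E) : Prop :=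
  ∀ P : G.Path, G.IsABPath A B P →
    ∀ i : Fin P.edges.length, P.edges.get i ∈ C' →
      ∃ j : Fin P.edges.length, (j : ℕ) ≤ (i : ℕ) ∧ P.edges.get j ∈ C

/-- `C` is the `⊴`-largest Erdős–Menger `AB`-cut. -/
def IsLargestEMABCut (A B : Set V) (C : Set E) : Prop :=
  G.IsEMABCut A B C ∧ ∀ C', G.IsEMABCut A B C' → G.ABCutLE A B C' C

/-- A system `Ps` of pairwise edge-disjoint `T`-paths *links* the terminal `t`:
it covers `δ(t)`. -/
def Links (Ps : Set G.Path) (t : V) : Prop :=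
  G.IsTPathSystem Ps ∧ ∀ e ∈ G.edgeCut {t}, ∃ P ∈ Ps, e ∈ P.edges

/-- The terminal `t` is linked. -/
def Linked (t : V) : Prop := ∃ Ps : Set G.Path, G.Links Ps t

/-- The linkability condition: every terminal is linked. -/
def LinkabilityCondition : Prop := ∀ t ∈ G.T, G.Linked t

/-- A perfect linkage: a system of pairwise edge-disjoint `T`-paths linking every
terminal. -/
def IsPerfectLinkage (Ps : Set G.Path) : Prop :=
  G.IsTPathSystem Ps ∧ ∀ t ∈ G.T, ∀ e ∈ G.edgeCut {t}, ∃ P ∈ Ps, e ∈ P.edges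

/-- In the two-terminal setting: a system of pairwise edge-disjoint `st`-paths
covering `δ(s)` (a linkage of `s`). -/
def IsStLinkage (s t : V) (Ps : Set G.Path) : Prop :=
  G.EdgeDisjoint Ps ∧ (∀ P ∈ Ps, G.IsABPath {s} {t} P) ∧
    ∀ e ∈ G.edgeCut {s}, ∃ P ∈ Ps, e ∈ P.edges

/-- `s` is linked (two-terminal setting). -/
def StLinked (s t : V) : Prop := ∃ Ps : Set G.Path, G.IsStLinkage s t Ps

/-- `λ_G(A,B)`: the maximal number of pairwise edge-disjoint `AB`-paths. -/
noncomputable def lambda (A B : Set V) : ℕ :=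
  sSup {n : ℕ | ∃ Ps : Set G.Path, G.EdgeDisjoint Ps ∧ (∀ P ∈ Ps, G.IsABPath A B P) ∧
    Ps.Finite ∧ Ps.ncard = n}

/-- The grapht obtained by deleting all edges outside `F`. -/
def restrict (F : Set E) : Grapht V F where
  I e := G.I e.1
  loopless e := G.loopless e.1
  T := G.T
  T_nontrivial := G.T_nontrivial

/-- The map sending every vertex of a contracted set `X t` (`t ∈ T`) to `t`. -/
noncomputable def contractMap (X : V → Set V) : V → V := fun v =>
  letI := Classical.dec (∃ u ∈ G.T, v ∈ X u)
  if h : ∃ u ∈ G.T, v ∈ X u then h.choose else v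

/-- The contraction `G/ℱ` of the family `ℱ = {X t : t ∈ T}`: each `X t` is contracted
to `t` and the arising loops are deleted. -/
noncomputable def contract (X : V → Set V) :
    Grapht V {e : E // ¬ ((G.I e).map (G.contractMap X)).IsDiag} where
  I e := (G.I e.1).map (G.contractMap X)
  loopless e := e.2
  T := G.T
  T_nontrivial := G.T_nontrivial

end Grapht

/-! Orient every edge of a linkage in its direction of travel. Suppose `𝒫` misses `e₀ ∈ δ(t)` while
the path `q₀ ∈ 𝒬` uses it, let `𝒬' = 𝒬 - q₀`, and explore from `s` all oriented edges that `𝒬'`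
does not traverse in that direction, except for the edges of `δ(t)` missed by `𝒫`.

If this search reaches `t` along a path `W`, then augmenting `𝒬'` by `W` gives a linkage that
misses `e₀` and has at most one edge of `δ(t)` not used by `𝒬`, since `W` has only one edge at `t`.
Otherwise the set `Z` of reached vertices is left by `𝒫` only through edges of `𝒬'`, and `𝒬'` never
re-enters it, so each path of `𝒫` can be followed until it first leaves `Z` and then continued
along the path of `𝒬'` that crosses there; this yields a linkage using only edges of `𝒬'` at `t`.

So every edge of `δ(t)` missed by `𝒫` but not by `𝒬` can be exchanged for at most one edge of
`δ(t)` used by `𝒫`. Repeated exchanges turn `𝒬` into a linkage that misses at least as many edges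
of `δ(t)` and, among them, all those missed by `𝒫`; by minimality it misses no others. -/

namespace Grapht

variable {V : Type u} {E : Type v}

/-- An oriented edge of `G`. Since `G` may have parallel edges, the edge is recorded along with its
source and target. -/
@[ext]
structure Dart (G : Grapht V E) where
  edge : E
  src : V
  tgt : V
  inc : G.I edge = s(src, tgt)

variable {G : Grapht V E}

namespace Dart

/-- The same edge with the opposite orientation. -/
def symm (a : G.Dart) : G.Dart where
  edge := a.edge
  src := a.tgt
  tgt := a.src
  inc := a.inc.trans Sym2.eq_swap

lemma src_ne_tgt (a : G.Dart) : a.src ≠ a.tgt := fun h =>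
  G.loopless a.edge (by rwa [a.inc, Sym2.mk_isDiag_iff])

lemma eq_or_eq_symm_of_edge_eq {a b : G.Dart} (h : a.edge = b.edge) : a = b ∨ a = b.symm := by
  have hI : s(a.src, a.tgt) = s(b.src, b.tgt) := by rw [← a.inc, ← b.inc, h]
  exact (Sym2.eq_iff.1 hI).imp (fun hab => Dart.ext h hab.1 hab.2)
    (fun hab => Dart.ext h hab.1 hab.2)

lemma eq_of_edge_eq_of_src_eq {a b : G.Dart} (he : a.edge = b.edge) (hs : a.src = b.src) :
    a = b := by
  rcases eq_or_eq_symm_of_edge_eq he with h | rfl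
  · exact h
  · exact absurd hs.symm b.src_ne_tgt

lemma edge_mem_edgeCut_singleton {a : G.Dart} {x : V} :
    a.edge ∈ G.edgeCut {x} ↔ a.src = x ∨ a.tgt = x := by
  constructor
  · rintro ⟨u, w, hI, rfl, -⟩
    exact (eq_or_eq_symm_of_edge_eq (a := a) (b := ⟨a.edge, u, w, hI⟩) rfl).imp
      (congrArg src) (congrArg tgt)
  · rintro (rfl | rfl)
    · exact ⟨a.src, a.tgt, a.inc, rfl, a.src_ne_tgt.symm⟩
    · exact ⟨a.tgt, a.src, a.symm.inc, rfl, a.src_ne_tgt⟩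

end Dart

lemma exists_dart_src_eq {e : E} {x : V} (he : e ∈ G.edgeCut {x}) :
    ∃ a : G.Dart, a.edge = e ∧ a.src = x := by
  obtain ⟨u, w, hI, hu, -⟩ := he
  exact ⟨⟨e, u, w, hI⟩, rfl, hu⟩

/-! ### Walks and paths as lists of darts -/

/-- The darts of `l`, in this order, form a walk from `u` to `v`. -/
def IsDartWalk : V → List G.Dart → V → Prop
  | u, [], v => u = v
  | u, a :: l, v => a.src = u ∧ IsDartWalk a.tgt l v

/-- The darts of `l`, in this order, form a path from `u` to `v`, i.e. a walk visiting no
vertex twice. -/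
def IsDartPath (u : V) (l : List G.Dart) (v : V) : Prop :=
  IsDartWalk u l v ∧ (u :: l.map Dart.tgt).Nodup

variable {u v x : V} {a b : G.Dart} {l l₁ l₂ m₁ m₂ : List G.Dart}

lemma isDartWalk_append :
    IsDartWalk u (l₁ ++ l₂) v ↔ ∃ w, IsDartWalk u l₁ w ∧ IsDartWalk w l₂ v := by
  induction l₁ generalizing u with
  | nil => simp [IsDartWalk]
  | cons a l ih => simp [IsDartWalk, ih, and_assoc]

namespace IsDartWalk

lemma src_mem (h : IsDartWalk u l v) (ha : a ∈ l) : a.src ∈ u :: l.map Dart.tgt := by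
  induction l generalizing u with
  | nil => simp at ha
  | cons c l ih =>
    rcases List.mem_cons.1 ha with rfl | ha
    · exact List.mem_cons.2 (Or.inl h.1)
    · exact List.mem_cons_of_mem _ (ih h.2 ha)

lemma getLast?_eq (h : IsDartWalk u l v) : (u :: l.map Dart.tgt).getLast? = some v := by
  induction l generalizing u with
  | nil => exact congrArg some h
  | cons c l ih => simpa using ih h.2

lemma end_mem (h : IsDartWalk u l v) : v ∈ u :: l.map Dart.tgt :=
  List.mem_of_getLast? h.getLast?_eq

lemma eq_of_map_edge_eq {l' : List G.Dart} {v' : V} (h : IsDartWalk u l v)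
    (h' : IsDartWalk u l' v') (he : l.map Dart.edge = l'.map Dart.edge) : l = l' := by
  induction l generalizing u l' with
  | nil => exact (List.map_eq_nil_iff.1 he.symm).symm
  | cons a l ih =>
    obtain ⟨b, l', rfl⟩ : ∃ b m, l' = b :: m :=
      List.exists_cons_of_ne_nil (by rintro rfl; simp at he)
    rw [List.map_cons, List.map_cons, List.cons.injEq] at he
    obtain rfl := Dart.eq_of_edge_eq_of_src_eq he.1 (h.1.trans h'.1.symm)
    rw [ih h.2 h'.2 he.2]

lemma isWalk (h : IsDartWalk u l v) : G.IsWalk (u :: l.map Dart.tgt) (l.map Dart.edge) := by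
  induction l generalizing u with
  | nil => exact .nil u
  | cons a l ih => exact .cons (h.1 ▸ a.inc) (ih h.2)

lemma exists_leaving_dart {Z : Set V} (h : IsDartWalk u l v) (hu : u ∈ Z) (hv : v ∉ Z) :
    ∃ l₁ a l₂, l = l₁ ++ a :: l₂ ∧ (∀ b ∈ l₁, b.src ∈ Z ∧ b.tgt ∈ Z) ∧ a.src ∈ Z ∧ a.tgt ∉ Z := by
  induction l generalizing u with
  | nil => exact absurd (h ▸ hu) hv
  | cons c l ih =>
    have hc : c.src ∈ Z := h.1 ▸ hu
    by_cases hc' : c.tgt ∈ Z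
    · obtain ⟨l₁, a, l₂, rfl, hl₁, ha⟩ := ih h.2 hc'
      exact ⟨c :: l₁, a, l₂, rfl, List.forall_mem_cons.2 ⟨⟨hc, hc'⟩, hl₁⟩, ha⟩
    · exact ⟨[], c, l, rfl, by simp, hc, hc'⟩

lemma forall_notMem_of_start_notMem {Z : Set V} (h : IsDartWalk u l v) (hu : u ∉ Z)
    (hZ : ∀ a ∈ l, a.src ∉ Z → a.tgt ∉ Z) : ∀ a ∈ l, a.src ∉ Z ∧ a.tgt ∉ Z := by
  induction l generalizing u with
  | nil => simp
  | cons c l ih =>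
    rw [List.forall_mem_cons] at hZ ⊢
    have hc : c.src ∉ Z := h.1 ▸ hu
    exact ⟨⟨hc, hZ.1 hc⟩, ih h.2 (hZ.1 hc) hZ.2⟩

lemma leaving_dart_unique {Z : Set V} (h : IsDartWalk u l v)
    (hZ : ∀ a ∈ l, a.src ∉ Z → a.tgt ∉ Z) (ha : a ∈ l) (haZ : a.src ∈ Z ∧ a.tgt ∉ Z)
    (hb : b ∈ l) (hbZ : b.src ∈ Z ∧ b.tgt ∉ Z) : a = b := by
  induction l generalizing u with
  | nil => simp at ha
  | cons c l ih =>
    rw [List.forall_mem_cons] at hZ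
    have outside (hc : c.tgt ∉ Z) := h.2.forall_notMem_of_start_notMem hc hZ.2
    rcases List.mem_cons.1 ha with rfl | hal <;> rcases List.mem_cons.1 hb with rfl | hbl
    · rfl
    · exact absurd hbZ.1 (outside haZ.2 b hbl).1
    · exact absurd haZ.1 (outside hbZ.2 a hal).1
    · exact ih h.2 hZ.2 hal hbl

end IsDartWalk

lemma IsWalk.exists_isDartWalk {vs : List V} {es : List E} (h : G.IsWalk vs es) :
    ∀ {u v}, vs.head? = some u → vs.getLast? = some v →
      ∃ l : List G.Dart, IsDartWalk u l v ∧ u :: l.map Dart.tgt = vs ∧ l.map Dart.edge = es := by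
  induction h with
  | nil x =>
    intro u v hu hv
    obtain rfl : x = u := Option.some.inj hu
    exact ⟨[], Option.some.inj hv, rfl, rfl⟩
  | @cons x y vs e es he _ ih =>
    intro u v hu hv
    obtain rfl : x = u := Option.some.inj hu
    obtain ⟨l, hl, hvs, hes⟩ := ih rfl (by simpa using hv)
    exact ⟨⟨e, x, y, he⟩ :: l, ⟨rfl, hl⟩, congrArg _ hvs, congrArg _ hes⟩

namespace IsDartPath

lemma of_cons (h : IsDartPath u (a :: l) v) : IsDartPath a.tgt l v :=
  ⟨h.1.2, (List.nodup_cons.1 h.2).2⟩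

lemma start_notMem (h : IsDartPath u (a :: l) v) : u ∉ a.tgt :: l.map Dart.tgt :=
  (List.nodup_cons.1 h.2).1

lemma nodup (h : IsDartPath u l v) : l.Nodup := h.2.of_cons.of_map _

lemma tgt_ne_start (h : IsDartPath u l v) (ha : a ∈ l) : a.tgt ≠ u := fun hau =>
  (List.nodup_cons.1 h.2).1 (hau ▸ List.mem_map_of_mem ha)

lemma eq_of_tgt_eq (h : IsDartPath u l v) (ha : a ∈ l) (hb : b ∈ l) (hab : a.tgt = b.tgt) :
    a = b :=
  List.inj_on_of_nodup_map h.2.of_cons ha hb hab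

lemma src_ne_end (h : IsDartPath u l v) (ha : a ∈ l) : a.src ≠ v := by
  induction l generalizing u with
  | nil => simp at ha
  | cons c l ih =>
    rcases List.mem_cons.1 ha with rfl | ha
    · rintro rfl
      exact h.start_notMem (h.1.1 ▸ h.1.2.end_mem)
    · exact ih h.of_cons ha

lemma head?_eq_of_src_eq (h : IsDartPath u l v) (ha : a ∈ l) (hau : a.src = u) :
    l.head? = some a := by
  cases l with
  | nil => simp at ha
  | cons c l =>
    rcases List.mem_cons.1 ha with rfl | ha
    · rfl
    · exact absurd (hau ▸ h.1.2.src_mem ha) h.start_notMem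

lemma exists_mem_src_eq (h : IsDartPath u l v) (huv : u ≠ v) : ∃ a ∈ l, a.src = u := by
  cases l with
  | nil => exact absurd h.1 huv
  | cons a l => exact ⟨a, List.mem_cons_self, h.1.1⟩

lemma symm_notMem (h : IsDartPath u l v) (ha : a ∈ l) : a.symm ∉ l := by
  induction l generalizing u with
  | nil => simp
  | cons c l ih =>
    intro ha'
    rcases List.mem_cons.1 ha with rfl | ha <;> rcases List.mem_cons.1 ha' with hc | ha'
    · exact a.src_ne_tgt (congrArg Dart.tgt hc)
    · exact h.tgt_ne_start (List.mem_cons_of_mem _ ha') h.1.1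
    · exact h.tgt_ne_start (List.mem_cons_of_mem _ ha) ((congrArg Dart.src hc).trans h.1.1)
    · exact ih h.of_cons ha ha'

lemma exists_isDartPath_from (h : IsDartPath u l v) (hx : x ∈ u :: l.map Dart.tgt) :
    ∃ m ⊆ l, IsDartPath x m v := by
  induction l generalizing u with
  | nil =>
    obtain rfl : x = u := by simpa using hx
    exact ⟨[], List.Subset.refl _, h⟩
  | cons c l ih =>
    rcases List.mem_cons.1 hx with rfl | hx
    · exact ⟨c :: l, List.Subset.refl _, h⟩
    · obtain ⟨m, hml, hm⟩ := ih h.of_cons hx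
      exact ⟨m, List.subset_cons_of_subset c hml, hm⟩

lemma splice {Z : Set V} {u' v' : V} (hl : IsDartPath u (l₁ ++ a :: l₂) v)
    (hm : IsDartPath u' (m₁ ++ a :: m₂) v') (hl₁ : ∀ x ∈ u :: l₁.map Dart.tgt, x ∈ Z)
    (hm₂ : ∀ x ∈ (a :: m₂).map Dart.tgt, x ∉ Z) : IsDartPath u (l₁ ++ a :: m₂) v' := by
  obtain ⟨w, hw, haw, -⟩ := isDartWalk_append.1 hl.1
  obtain ⟨-, -, -, hm'⟩ := isDartWalk_append.1 hm.1
  refine ⟨isDartWalk_append.2 ⟨w, hw, haw, hm'⟩, ?_⟩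
  have hln := hl.2
  have hmn := hm.2.of_cons
  rw [List.map_append, ← List.cons_append] at hln ⊢
  rw [List.map_append] at hmn
  exact hln.of_append_left.append hmn.of_append_right fun x hx hx' => hm₂ x hx' (hl₁ x hx)

end IsDartPath

lemma IsDartWalk.exists_isDartPath (h : IsDartWalk u l v) : ∃ m ⊆ l, IsDartPath u m v := by
  induction l generalizing u with
  | nil => exact ⟨[], List.Subset.refl _, h, by simp⟩
  | cons a l ih =>
    obtain ⟨m, hml, hm⟩ := ih h.2
    by_cases hu : u ∈ a.tgt :: m.map Dart.tgt
    · obtain ⟨m', hm'm, hm'⟩ := hm.exists_isDartPath_from hu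
      exact ⟨m', List.subset_cons_of_subset a (List.Subset.trans hm'm hml), hm'⟩
    · exact ⟨a :: m, List.cons_subset_cons a hml, ⟨h.1, hm.1⟩, List.nodup_cons.2 ⟨hu, hm.2⟩⟩

namespace Path

lemma exists_darts (P : G.Path) :
    ∃ l : List G.Dart, IsDartPath P.first l P.last ∧ l.map Dart.edge = P.edges := by
  obtain ⟨l, hl, hvs, hes⟩ := P.isWalk.exists_isDartWalk P.head_eq P.getLast_eq
  exact ⟨l, ⟨hl, hvs ▸ P.nodup⟩, hes⟩

/-- The edges of a path, oriented in the direction of travel. -/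
noncomputable def darts (P : G.Path) : List G.Dart := P.exists_darts.choose

lemma isDartPath_darts (P : G.Path) : IsDartPath P.first P.darts P.last :=
  P.exists_darts.choose_spec.1

lemma map_edge_darts (P : G.Path) : P.darts.map Dart.edge = P.edges :=
  P.exists_darts.choose_spec.2

lemma mem_edges_iff {P : G.Path} {e : E} : e ∈ P.edges ↔ ∃ a ∈ P.darts, a.edge = e := by
  rw [← P.map_edge_darts, List.mem_map]

lemma edge_mem_edges {P : G.Path} (ha : a ∈ P.darts) : a.edge ∈ P.edges :=
  mem_edges_iff.2 ⟨a, ha, rfl⟩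

end Path

lemma IsDartPath.exists_path (h : IsDartPath u l v) :
    ∃ P : G.Path, P.first = u ∧ P.last = v ∧ P.darts = l := by
  let P : G.Path :=
    ⟨u, v, u :: l.map Dart.tgt, l.map Dart.edge, h.1.isWalk, h.2, rfl, h.1.getLast?_eq⟩
  exact ⟨P, rfl, rfl, P.isDartPath_darts.1.eq_of_map_edge_eq h.1 P.map_edge_darts⟩

/-! ### Systems of `st`-paths -/

lemma isABPath_singleton_iff {s t : V} {P : G.Path} :
    G.IsABPath {s} {t} P ↔ P.first = s ∧ P.last = t := by
  refine ⟨fun h => ⟨h.1, h.2.1⟩, ?_⟩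
  rintro ⟨rfl, rfl⟩
  refine ⟨rfl, rfl, fun x hx hxst => ?_⟩
  obtain ⟨l, hl⟩ : ∃ l, P.verts = P.first :: l := List.head?_eq_some_iff.1 P.head_eq
  have hx : x ∈ l.dropLast := by simpa [Path.inner, hl] using hx
  have hlne : l ≠ [] := by rintro rfl; simp at hx
  have hlast : l.getLast hlne = P.last := by
    have := P.getLast_eq
    rwa [hl, List.getLast?_cons_of_ne_nil hlne, List.getLast?_eq_some_getLast hlne,
      Option.some_inj] at this
  have hnd : (P.first :: l).Nodup := hl ▸ P.nodup
  rcases hxst with rfl | rfl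
  · exact (List.nodup_cons.1 hnd).1 (List.mem_of_mem_dropLast hx)
  · rw [← List.dropLast_append_getLast hlne, hlast] at hnd
    exact (List.disjoint_of_nodup_append hnd.of_cons) hx List.mem_cons_self

lemma IsABPath.isDartPath {s t : V} {P : G.Path} (h : G.IsABPath {s} {t} P) :
    IsDartPath s P.darts t := by
  obtain ⟨rfl, rfl⟩ := isABPath_singleton_iff.1 h
  exact P.isDartPath_darts

/-- The edges traversed by a path system, oriented in the direction of travel; the oriented
counterpart of `sysEdges`. -/
def sysDarts (Ps : Set G.Path) : Set G.Dart := {a | ∃ P ∈ Ps, a ∈ P.darts}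

/-- A system of pairwise edge-disjoint `st`-paths. -/
def IsStSystem (G : Grapht V E) (s t : V) (Ps : Set G.Path) : Prop :=
  G.EdgeDisjoint Ps ∧ ∀ P ∈ Ps, G.IsABPath {s} {t} P

variable {s t : V} {a₀ : G.Dart} {e : E} {P Q : G.Path} {Ps Qs : Set G.Path}

lemma mem_sysEdges : e ∈ G.sysEdges Ps ↔ ∃ P ∈ Ps, e ∈ P.edges := by
  simp [sysEdges, Path.edgeSet]

lemma mem_sysEdges_iff_exists_dart : e ∈ G.sysEdges Ps ↔ ∃ a ∈ sysDarts Ps, a.edge = e := by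
  rw [mem_sysEdges]
  constructor
  · rintro ⟨P, hP, he⟩
    obtain ⟨a, ha, hae⟩ := Path.mem_edges_iff.1 he
    exact ⟨a, ⟨P, hP, ha⟩, hae⟩
  · rintro ⟨a, ⟨P, hP, ha⟩, rfl⟩
    exact ⟨P, hP, Path.edge_mem_edges ha⟩

lemma edge_mem_sysEdges (ha : a ∈ sysDarts Ps) : a.edge ∈ G.sysEdges Ps :=
  mem_sysEdges_iff_exists_dart.2 ⟨a, ha, rfl⟩

lemma sysDarts_mono (h : Ps ⊆ Qs) : sysDarts Ps ⊆ sysDarts Qs :=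
  fun _ ⟨P, hP, ha⟩ => ⟨P, h hP, ha⟩

lemma sysEdges_mono (h : Ps ⊆ Qs) : G.sysEdges Ps ⊆ G.sysEdges Qs :=
  Set.biUnion_subset_biUnion_left h

lemma sysDarts_union : sysDarts (Ps ∪ Qs) = sysDarts Ps ∪ sysDarts Qs := by
  ext a
  simp only [sysDarts, Set.mem_union, Set.mem_ofPred_eq, or_and_right, exists_or]

lemma sysEdges_union : G.sysEdges (Ps ∪ Qs) = G.sysEdges Ps ∪ G.sysEdges Qs :=
  Set.biUnion_union _ _ _

lemma disjoint_sysEdges (h : ∀ a ∈ sysDarts Ps, a ∉ sysDarts Qs ∧ a.symm ∉ sysDarts Qs) :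
    Disjoint (G.sysEdges Ps) (G.sysEdges Qs) := by
  refine Set.disjoint_left.2 fun e heP heQ => ?_
  obtain ⟨a, ha, rfl⟩ := mem_sysEdges_iff_exists_dart.1 heP
  obtain ⟨b, hb, hba⟩ := mem_sysEdges_iff_exists_dart.1 heQ
  rcases Dart.eq_or_eq_symm_of_edge_eq hba with rfl | rfl
  exacts [(h b ha).1 hb, (h a ha).2 hb]

lemma EdgeDisjoint.eq_of_mem (h : G.EdgeDisjoint Ps) (hP : P ∈ Ps) (hQ : Q ∈ Ps)
    (heP : e ∈ P.edges) (heQ : e ∈ Q.edges) : P = Q := by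
  by_contra hne
  exact h hP hQ hne e heP heQ

lemma EdgeDisjoint.notMem_sysEdges_sdiff_singleton (h : G.EdgeDisjoint Ps) (hP : P ∈ Ps)
    (he : e ∈ P.edges) : e ∉ G.sysEdges (Ps \ {P}) := fun heP => by
  obtain ⟨Q, hQ, heQ⟩ := mem_sysEdges.1 heP
  exact hQ.2 (h.eq_of_mem hQ.1 hP heQ he)

lemma EdgeDisjoint.finite_setOf_exists_mem (h : G.EdgeDisjoint Ps) {F : Set E} (hF : F.Finite) :
    {P ∈ Ps | ∃ e ∈ F, e ∈ P.edges}.Finite := by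
  refine (hF.biUnion (t := fun e => {P ∈ Ps | e ∈ P.edges}) fun e _ =>
    Set.Subsingleton.finite fun P hP Q hQ => h.eq_of_mem hP.1 hQ.1 hP.2 hQ.2).subset ?_
  rintro P ⟨hP, e, heF, heP⟩
  exact Set.mem_biUnion heF ⟨hP, heP⟩

lemma isStLinkage_iff :
    G.IsStLinkage s t Ps ↔ G.IsStSystem s t Ps ∧ ∀ a : G.Dart, a.src = s → a ∈ sysDarts Ps := by
  rw [IsStLinkage, IsStSystem, and_assoc]
  refine and_congr_right fun _ => and_congr_right fun hAB =>
    ⟨fun hcov a has => ?_, fun hcov e he => ?_⟩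
  · obtain ⟨P, hP, haP⟩ := hcov a.edge (Dart.edge_mem_edgeCut_singleton.2 (Or.inl has))
    obtain ⟨b, hb, hba⟩ := Path.mem_edges_iff.1 haP
    rcases Dart.eq_or_eq_symm_of_edge_eq hba with rfl | rfl
    · exact ⟨P, hP, hb⟩
    · exact absurd has ((hAB P hP).isDartPath.tgt_ne_start hb)
  · obtain ⟨a, rfl, has⟩ := exists_dart_src_eq he
    exact mem_sysEdges.1 (edge_mem_sysEdges (hcov a has))

namespace IsStSystem

lemma mono (hQ : G.IsStSystem s t Qs) (h : Ps ⊆ Qs) : G.IsStSystem s t Ps :=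
  ⟨hQ.1.mono h, fun P hP => hQ.2 P (h hP)⟩

lemma union (hP : G.IsStSystem s t Ps) (hQ : G.IsStSystem s t Qs)
    (h : Disjoint (G.sysEdges Ps) (G.sysEdges Qs)) : G.IsStSystem s t (Ps ∪ Qs) := by
  have hdisj {P Q} (hP : P ∈ Ps) (hQ : Q ∈ Qs) {e} (heP : e ∈ P.edges) : e ∉ Q.edges := fun heQ =>
    Set.disjoint_left.1 h (mem_sysEdges.2 ⟨P, hP, heP⟩) (mem_sysEdges.2 ⟨Q, hQ, heQ⟩)
  refine ⟨?_, fun P => Or.rec (hP.2 P) (hQ.2 P)⟩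
  rintro P (hP' | hP') Q (hQ' | hQ') hne e heP heQ
  · exact hP.1 hP' hQ' hne e heP heQ
  · exact hdisj hP' hQ' heP heQ
  · exact hdisj hQ' hP' heQ heP
  · exact hQ.1 hP' hQ' hne e heP heQ

lemma tgt_ne_start (h : G.IsStSystem s t Ps) (ha : a ∈ sysDarts Ps) : a.tgt ≠ s := by
  obtain ⟨P, hP, haP⟩ := ha
  exact (h.2 P hP).isDartPath.tgt_ne_start haP

lemma src_ne_end (h : G.IsStSystem s t Ps) (ha : a ∈ sysDarts Ps) : a.src ≠ t := by
  obtain ⟨P, hP, haP⟩ := ha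
  exact (h.2 P hP).isDartPath.src_ne_end haP

lemma symm_notMem (h : G.IsStSystem s t Ps) (ha : a ∈ sysDarts Ps) : a.symm ∉ sysDarts Ps := by
  obtain ⟨P, hP, haP⟩ := ha
  rintro ⟨Q, hQ, haQ⟩
  obtain rfl := h.1.eq_of_mem hP hQ (Path.edge_mem_edges haP)
    (Path.edge_mem_edges (a := a.symm) haQ)
  exact (h.2 P hP).isDartPath.symm_notMem haP haQ

end IsStSystem

/-! ### Flow decomposition -/

section Flow

variable [DecidableEq V]

/-- The boundary of a dart as an integral `0`-chain, with the sign such that its value at `x` is the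
net number of times the dart leaves `x`. -/
def Dart.boundary (a : G.Dart) : V → ℤ := Pi.single a.src 1 - Pi.single a.tgt 1

lemma Dart.boundary_symm (a : G.Dart) : a.symm.boundary = -a.boundary :=
  (neg_sub _ _).symm

lemma Dart.boundary_apply_nonneg (h : a.tgt ≠ x) : 0 ≤ a.boundary x := by
  simp only [boundary, Pi.sub_apply, Pi.single_apply, if_neg h.symm, sub_zero]
  split_ifs <;> simp

lemma sum_boundary_apply_nonneg {F : Finset G.Dart} (h : ∀ a ∈ F, a.tgt ≠ x) :
    0 ≤ (∑ a ∈ F, a.boundary) x := by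
  rw [Finset.sum_apply]
  exact Finset.sum_nonneg fun a ha => Dart.boundary_apply_nonneg (h a ha)

lemma sum_boundary_apply_pos {F : Finset G.Dart} (h : ∀ a ∈ F, a.tgt ≠ a₀.src) (ha₀ : a₀ ∈ F) :
    0 < (∑ a ∈ F, a.boundary) a₀.src := by
  rw [Finset.sum_apply]
  refine Finset.sum_pos' (fun a ha => Dart.boundary_apply_nonneg (h a ha)) ⟨a₀, ha₀, ?_⟩
  simp [Dart.boundary, a₀.src_ne_tgt]

lemma IsDartWalk.sum_map_boundary (h : IsDartWalk u l v) :
    (l.map Dart.boundary).sum = Pi.single u 1 - Pi.single v 1 := by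
  induction l generalizing u with
  | nil => obtain rfl : u = v := h; simp
  | cons a l ih => rw [List.map_cons, List.sum_cons, ih h.2, Dart.boundary, h.1, sub_add_sub_cancel]

lemma IsDartPath.sum_boundary [DecidableEq G.Dart] (h : IsDartPath u l v) :
    ∑ a ∈ l.toFinset, a.boundary = Pi.single u 1 - Pi.single v 1 := by
  rw [List.sum_toFinset _ h.nodup, h.1.sum_map_boundary]

lemma IsDartPath.sum_boundary_apply_nonneg [DecidableEq G.Dart] (h : IsDartPath u l v)
    (hx : x ≠ v) : 0 ≤ (∑ a ∈ l.toFinset, a.boundary) x := by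
  rw [h.sum_boundary, Pi.sub_apply, Pi.single_eq_of_ne hx, sub_zero, Pi.single_apply]
  split_ifs <;> simp

/-- Follow an arbitrary dart of `F` out of `u` and delete it: the surplus of `u` moves on to the
next vertex. -/
lemma exists_isDartWalk_of_sum_boundary_nonneg (F : Finset G.Dart)
    (hF : ∀ x ≠ t, 0 ≤ (∑ a ∈ F, a.boundary) x) (hu : 0 < (∑ a ∈ F, a.boundary) u) :
    ∃ l, IsDartWalk u l t ∧ ∀ a ∈ l, a ∈ F := by
  classical
  induction F using Finset.strongInduction generalizing u with
  | H F ih =>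
    obtain rfl | hut := eq_or_ne u t
    · exact ⟨[], rfl, by simp⟩
    obtain ⟨a, ha, rfl⟩ : ∃ a ∈ F, a.src = u := by
      by_contra! hsrc
      refine hu.not_ge ?_
      rw [Finset.sum_apply]
      refine Finset.sum_nonpos fun a ha => ?_
      simp only [Dart.boundary, Pi.sub_apply, Pi.single_apply, if_neg (hsrc a ha).symm]
      split_ifs <;> simp
    have herase (x : V) : (∑ b ∈ F.erase a, b.boundary) x =
        (∑ b ∈ F, b.boundary) x - (if x = a.src then 1 else 0) + if x = a.tgt then 1 else 0 := by
      rw [← Finset.add_sum_erase F _ ha, Dart.boundary]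
      simp only [Pi.add_apply, Pi.sub_apply, Pi.single_apply]
      ring
    obtain hat | hat := eq_or_ne a.tgt t
    · exact ⟨[a], ⟨rfl, hat⟩, by simpa using ha⟩
    have herase_nonneg (x : V) (hx : x ≠ t) : 0 ≤ (∑ b ∈ F.erase a, b.boundary) x := by
      rw [herase]
      obtain rfl | hxa := eq_or_ne x a.src
      · rw [if_pos rfl]; split_ifs <;> omega
      · rw [if_neg hxa]; have := hF x hx; split_ifs <;> omega
    have herase_pos : 0 < (∑ b ∈ F.erase a, b.boundary) a.tgt := by
      rw [herase, if_neg a.src_ne_tgt.symm, if_pos rfl]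
      linarith [hF _ hat]
    obtain ⟨l, hl, hlF⟩ := ih _ (Finset.erase_ssubset ha) herase_nonneg herase_pos
    exact ⟨a :: l, ⟨rfl, hl⟩, List.forall_mem_cons.2
      ⟨ha, fun b hb => Finset.mem_of_mem_erase (hlF b hb)⟩⟩

/-- Darts of `F` whose reverse also lies in `F` cancel in pairs. -/
lemma exists_oriented_subset (F : Finset G.Dart) :
    ∃ F' ⊆ F, (∀ a ∈ F', a.symm ∉ F') ∧ (∀ a ∈ F, a.symm ∉ F → a ∈ F') ∧
      ∑ a ∈ F', a.boundary = ∑ a ∈ F, a.boundary := by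
  classical
  refine ⟨F.filter fun a => a.symm ∉ F, Finset.filter_subset _ _, fun a ha ha' => ?_,
    fun a ha ha' => Finset.mem_filter.2 ⟨ha, ha'⟩, ?_⟩
  · exact (Finset.mem_filter.1 ha).2 (Finset.mem_filter.1 ha').1
  · have hcancel : ∑ a ∈ F with a.symm ∈ F, a.boundary = 0 := by
      refine Finset.sum_involution (fun a _ => a.symm) (fun a _ => ?_) (fun a _ _ h => ?_)
        (fun a ha => ?_) (fun a _ => rfl)
      · rw [Dart.boundary_symm, add_neg_cancel]
      · exact a.src_ne_tgt.symm (congrArg Dart.src h)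
      · exact Finset.mem_filter.2 (Finset.mem_filter.1 ha).symm
    rw [← Finset.sum_filter_add_sum_filter_not F (fun a => a.symm ∈ F), hcancel, zero_add]

lemma exists_isABPath_of_sum_boundary_nonneg {F : Finset G.Dart}
    (hF : ∀ x ≠ t, 0 ≤ (∑ a ∈ F, a.boundary) x) (hs : ∀ a ∈ F, a.tgt ≠ s)
    (ha₀ : a₀ ∈ F) (ha₀s : a₀.src = s) :
    ∃ P, G.IsABPath {s} {t} P ∧ sysDarts {P} ⊆ (F : Set G.Dart) := by
  subst ha₀s
  obtain ⟨l, hl, hlF⟩ :=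
    exists_isDartWalk_of_sum_boundary_nonneg F hF (sum_boundary_apply_pos hs ha₀)
  obtain ⟨m, hml, hm⟩ := hl.exists_isDartPath
  obtain ⟨P, hPs, hPt, rfl⟩ := hm.exists_path
  refine ⟨P, isABPath_singleton_iff.2 ⟨hPs, hPt⟩, ?_⟩
  rintro a ⟨_, rfl, ha⟩
  exact hlF a (hml ha)

lemma exists_isStSystem_of_oriented (hst : s ≠ t) (F : Finset G.Dart)
    (hF : ∀ x ≠ t, 0 ≤ (∑ a ∈ F, a.boundary) x) (hs : ∀ a ∈ F, a.tgt ≠ s)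
    (hori : ∀ a ∈ F, a.symm ∉ F) :
    ∃ Rs, G.IsStSystem s t Rs ∧ sysDarts Rs ⊆ F ∧ ∀ a ∈ F, a.src = s → a ∈ sysDarts Rs := by
  classical
  induction F using Finset.strongInduction with
  | H F ih =>
    by_cases hex : ∃ a ∈ F, a.src = s
    swap
    · exact ⟨∅, ⟨Set.pairwise_empty _, by simp⟩, by simp [sysDarts],
        fun a ha has => absurd ⟨a, ha, has⟩ hex⟩
    obtain ⟨a₀, ha₀, ha₀s⟩ := hex
    obtain ⟨P, hP, hPF⟩ := exists_isABPath_of_sum_boundary_nonneg hF hs ha₀ ha₀s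
    obtain ⟨c, hc, -⟩ := hP.isDartPath.exists_mem_src_eq hst
    have hsub : P.darts.toFinset ⊆ F := fun a ha => hPF ⟨P, rfl, List.mem_toFinset.1 ha⟩
    have hss : F \ P.darts.toFinset ⊂ F :=
      Finset.sdiff_ssubset hsub ⟨c, List.mem_toFinset.2 hc⟩
    have hrest : ∀ x ≠ t, 0 ≤ (∑ a ∈ F \ P.darts.toFinset, a.boundary) x := by
      intro x hxt
      obtain rfl | hxs := eq_or_ne x s
      · exact sum_boundary_apply_nonneg fun a ha => hs a (hss.1 ha)
      · rw [Finset.sum_sdiff_eq_sub hsub, hP.isDartPath.sum_boundary]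
        simpa [hxs, hxt] using hF x hxt
    obtain ⟨Rs, hRs, hRsF, hRss⟩ := ih _ hss hrest (fun a ha => hs a (hss.1 ha))
      fun a ha ha' => hori a (hss.1 ha) (hss.1 ha')
    have hPsys : G.IsStSystem s t {P} := ⟨Set.pairwise_singleton _ _, by simpa using hP⟩
    refine ⟨{P} ∪ Rs, hPsys.union hRs ?_, ?_, fun a ha has => ?_⟩
    · refine disjoint_sysEdges fun a haP => ⟨fun haR => ?_, fun haR => ?_⟩
      · obtain ⟨_, rfl, haP⟩ := haP
        exact (Finset.mem_sdiff.1 (hRsF haR)).2 (List.mem_toFinset.2 haP)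
      · exact hori a (hPF haP) (hss.1 (hRsF haR))
    · rw [sysDarts_union]
      exact Set.union_subset hPF fun a ha => hss.1 (hRsF ha)
    · rw [sysDarts_union]
      by_cases haP : a ∈ P.darts
      · exact Or.inl ⟨P, rfl, haP⟩
      · exact Or.inr (hRss a (Finset.mem_sdiff.2 ⟨ha, by simpa using haP⟩) has)

theorem exists_isStSystem_of_sum_boundary_nonneg (hst : s ≠ t) (F : Finset G.Dart)
    (hF : ∀ x ≠ t, 0 ≤ (∑ a ∈ F, a.boundary) x) (hs : ∀ a ∈ F, a.tgt ≠ s) :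
    ∃ Rs, G.IsStSystem s t Rs ∧ sysDarts Rs ⊆ F ∧ ∀ a ∈ F, a.src = s → a ∈ sysDarts Rs := by
  obtain ⟨F', hF'F, hori, hkeep, hsum⟩ := exists_oriented_subset F
  obtain ⟨Rs, hRs, hRsF, hRss⟩ := exists_isStSystem_of_oriented hst F' (hsum ▸ hF)
    (fun a ha => hs a (hF'F ha)) hori
  exact ⟨Rs, hRs, fun a ha => hF'F (hRsF ha),
    fun a ha has => hRss a (hkeep a ha fun ha' => hs _ ha' has) has⟩

lemma IsStSystem.exists_finset_eq_sysDarts (hPs : G.IsStSystem s t Ps) (hfin : Ps.Finite) :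
    ∃ F : Finset G.Dart, (F : Set G.Dart) = sysDarts Ps ∧
      ∀ x ≠ t, 0 ≤ (∑ a ∈ F, a.boundary) x := by
  classical
  refine ⟨hfin.toFinset.biUnion fun P => P.darts.toFinset, by ext; simp [sysDarts],
    fun x hx => ?_⟩
  rw [Finset.sum_biUnion, Finset.sum_apply]
  · refine Finset.sum_nonneg fun P hP => ?_
    exact (hPs.2 P (hfin.mem_toFinset.1 hP)).isDartPath.sum_boundary_apply_nonneg hx
  · intro P hP Q hQ hPQ
    refine Finset.disjoint_left.2 fun a haP haQ => hPQ ?_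
    exact hPs.1.eq_of_mem (hfin.mem_toFinset.1 hP) (hfin.mem_toFinset.1 hQ)
      (Path.edge_mem_edges (List.mem_toFinset.1 haP))
      (Path.edge_mem_edges (List.mem_toFinset.1 haQ))

end Flow

/-! ### Augmenting a path system -/

lemma IsStSystem.exists_augment_of_finite {W : List G.Dart} (hst : s ≠ t)
    (hQs : G.IsStSystem s t Qs) (hfin : Qs.Finite) (hW : IsDartPath s W t)
    (hWQ : ∀ a ∈ W, a ∉ sysDarts Qs) :
    ∃ Rs, G.IsStSystem s t Rs ∧ G.sysEdges Rs ⊆ G.sysEdges Qs ∪ Dart.edge '' {a | a ∈ W} ∧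
      ∀ a : G.Dart, a.src = s → a ∈ sysDarts Qs ∨ a ∈ W → a ∈ sysDarts Rs := by
  classical
  obtain ⟨F, hFQ, hF⟩ := hQs.exists_finset_eq_sysDarts hfin
  have memFW {a} : a ∈ F ∪ W.toFinset ↔ a ∈ sysDarts Qs ∨ a ∈ W := by
    rw [Finset.mem_union, List.mem_toFinset, ← hFQ, Finset.mem_coe]
  have hFW : Disjoint F W.toFinset := Finset.disjoint_left.2 fun a haF haW =>
    hWQ a (List.mem_toFinset.1 haW) (hFQ ▸ haF)
  have hbal : ∀ x ≠ t, 0 ≤ (∑ a ∈ F ∪ W.toFinset, a.boundary) x := by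
    intro x hx
    rw [Finset.sum_union hFW]
    exact add_nonneg (hF x hx) (hW.sum_boundary_apply_nonneg hx)
  have hs : ∀ a ∈ F ∪ W.toFinset, a.tgt ≠ s := fun a ha =>
    (memFW.1 ha).elim hQs.tgt_ne_start hW.tgt_ne_start
  obtain ⟨Rs, hRs, hRsF, hRss⟩ := exists_isStSystem_of_sum_boundary_nonneg hst _ hbal hs
  refine ⟨Rs, hRs, fun e he => ?_, fun a has ha => hRss a (memFW.2 ha) has⟩
  obtain ⟨a, ha, rfl⟩ := mem_sysEdges_iff_exists_dart.1 he
  exact (memFW.1 (hRsF ha)).imp edge_mem_sysEdges (Set.mem_image_of_mem _)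

/-- Only the finitely many paths of `Qs` that share an edge with `W` have to be rerouted. -/
theorem IsStSystem.exists_augment {W : List G.Dart} (hst : s ≠ t) (hQs : G.IsStSystem s t Qs)
    (hW : IsDartPath s W t) (hWQ : ∀ a ∈ W, a ∉ sysDarts Qs) :
    ∃ Rs, G.IsStSystem s t Rs ∧ G.sysEdges Rs ⊆ G.sysEdges Qs ∪ Dart.edge '' {a | a ∈ W} ∧
      ∀ a : G.Dart, a.src = s → a ∈ sysDarts Qs ∨ a ∈ W → a ∈ sysDarts Rs := by
  let A : Set G.Path := {q ∈ Qs | ∃ e ∈ Dart.edge '' {a | a ∈ W}, e ∈ q.edges}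
  have hAQ : A ⊆ Qs := fun q hq => hq.1
  have hAfin : A.Finite := hQs.1.finite_setOf_exists_mem (W.finite_toSet.image _)
  obtain ⟨Rs, hRs, hRsE, hRss⟩ := (hQs.mono hAQ).exists_augment_of_finite hst hAfin hW
    fun a ha haA => hWQ a ha (sysDarts_mono hAQ haA)
  have hdisj : Disjoint (G.sysEdges (Qs \ A)) (G.sysEdges Rs) := by
    refine Set.disjoint_left.2 fun e heQ heR => ?_
    obtain ⟨q, ⟨hq, hqA⟩, heq⟩ := mem_sysEdges.1 heQ
    rcases hRsE heR with heA | heW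
    · obtain ⟨p, hp, hep⟩ := mem_sysEdges.1 heA
      exact hqA (hQs.1.eq_of_mem hq (hAQ hp) heq hep ▸ hp)
    · exact hqA ⟨hq, e, heW, heq⟩
  refine ⟨Qs \ A ∪ Rs, (hQs.mono Set.sdiff_subset).union hRs hdisj, ?_, fun a has ha => ?_⟩
  · rw [sysEdges_union]
    exact Set.union_subset ((sysEdges_mono Set.sdiff_subset).trans Set.subset_union_left)
      (hRsE.trans (Set.union_subset_union_left _ (sysEdges_mono hAQ)))
  · rw [sysDarts_union]
    rcases ha with ⟨q, hq, haq⟩ | haW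
    · by_cases hqA : q ∈ A
      · exact Or.inr (hRss a has (Or.inl ⟨q, hqA, haq⟩))
      · exact Or.inl ⟨q, ⟨hq, hqA⟩, haq⟩
    · exact Or.inr (hRss a has (Or.inr haW))

/-! ### Splicing two path systems along a cut -/

/-- `R` follows `P` inside `Z` up to a dart at which `P` and `q` both leave `Z`, and then follows
`q` outside `Z`. -/
structure IsSplice (Z : Set V) (P q R : G.Path) : Prop where
  exists_leaving : ∃ a ∈ P.darts, a ∈ q.darts ∧ a.src ∈ Z ∧ a.tgt ∉ Z
  mem_darts : ∀ b ∈ R.darts,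
    (b ∈ P.darts ∧ b.src ∈ Z ∧ b.tgt ∈ Z) ∨ (b ∈ q.darts ∧ b.tgt ∉ Z)
  head?_darts : R.darts.head? = P.darts.head?

lemma exists_isSplice {Z : Set V} (hs : s ∈ Z) (ht : t ∉ Z) (hP : G.IsABPath {s} {t} P)
    (hQs : ∀ q ∈ Qs, G.IsABPath {s} {t} q)
    (hout : ∀ a ∈ P.darts, a.src ∈ Z → a.tgt ∉ Z → a ∈ sysDarts Qs)
    (hin : ∀ a ∈ sysDarts Qs, a.src ∉ Z → a.tgt ∉ Z) :
    ∃ q ∈ Qs, ∃ R, G.IsABPath {s} {t} R ∧ IsSplice Z P q R := by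
  have hPd := hP.isDartPath
  obtain ⟨l₁, a, l₂, hl, hl₁, ha, ha'⟩ := hPd.1.exists_leaving_dart hs ht
  have haP : a ∈ P.darts := by simp [hl]
  obtain ⟨q, hq, haq⟩ := hout a haP ha ha'
  have hqd := (hQs q hq).isDartPath
  obtain ⟨m₁, m₂, hm⟩ := List.append_of_mem haq
  have hm₂ : ∀ b ∈ m₂, b.src ∉ Z ∧ b.tgt ∉ Z := by
    obtain ⟨_, -, -, hwalk⟩ := isDartWalk_append.1 (hm ▸ hqd.1)
    exact hwalk.forall_notMem_of_start_notMem ha' fun b hb => hin b ⟨q, hq, by simp [hm, hb]⟩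
  have ham₂ : ∀ b ∈ a :: m₂, b.tgt ∉ Z :=
    List.forall_mem_cons.2 ⟨ha', fun b hb => (hm₂ b hb).2⟩
  have hsplice : IsDartPath s (l₁ ++ a :: m₂) t := by
    refine (hl ▸ hPd).splice (hm ▸ hqd) ?_ (List.forall_mem_map.2 ham₂)
    exact List.forall_mem_cons.2 ⟨hs, List.forall_mem_map.2 fun b hb => (hl₁ b hb).2⟩
  obtain ⟨R, hRs, hRt, hR⟩ := hsplice.exists_path
  refine ⟨q, hq, R, isABPath_singleton_iff.2 ⟨hRs, hRt⟩, ⟨a, haP, haq, ha, ha'⟩, fun b hb => ?_, ?_⟩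
  · rcases List.mem_append.1 (hR ▸ hb) with hb | hb
    · exact Or.inl ⟨by simp [hl, hb], hl₁ b hb⟩
    · exact Or.inr ⟨hm ▸ List.mem_append_right _ hb, ham₂ b hb⟩
  · rw [hR, hl, List.head?_append, List.head?_append, List.head?_cons, List.head?_cons]

lemma IsSplice.eq_of_mem_edges {Z : Set V} {P' q q' R R' : G.Path} (hPs : G.EdgeDisjoint Ps)
    (hQs : G.IsStSystem s t Qs) (hin : ∀ a ∈ sysDarts Qs, a.src ∉ Z → a.tgt ∉ Z)
    (hP : P ∈ Ps) (hP' : P' ∈ Ps) (hq : q ∈ Qs) (hq' : q' ∈ Qs)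
    (h : IsSplice Z P q R) (h' : IsSplice Z P' q' R') (he : e ∈ R.edges) (he' : e ∈ R'.edges) :
    P = P' := by
  obtain ⟨b, hb, rfl⟩ := Path.mem_edges_iff.1 he
  obtain ⟨b', hb', hbb'⟩ := Path.mem_edges_iff.1 he'
  have heP {P : G.Path} (hb'P : b' ∈ P.darts) : b.edge ∈ P.edges :=
    hbb' ▸ Path.edge_mem_edges hb'P
  rcases h.mem_darts b hb with ⟨hbP, hbs, hbt⟩ | ⟨hbq, hbt⟩ <;>
    rcases h'.mem_darts b' hb' with ⟨hbP', hbs', hbt'⟩ | ⟨hbq', hbt'⟩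
  · exact hPs.eq_of_mem hP hP' (Path.edge_mem_edges hbP) (heP hbP')
  · rcases Dart.eq_or_eq_symm_of_edge_eq hbb' with rfl | rfl
    exacts [absurd hbt hbt', absurd hbs hbt']
  · rcases Dart.eq_or_eq_symm_of_edge_eq hbb' with rfl | rfl
    exacts [absurd hbt' hbt, absurd hbs' hbt]
  · obtain rfl := hQs.1.eq_of_mem hq hq' (Path.edge_mem_edges hbq) (heP hbq')
    obtain ⟨a, haP, haq, ha⟩ := h.exists_leaving
    obtain ⟨a', haP', haq', ha'⟩ := h'.exists_leaving
    obtain rfl := (hQs.2 q hq).isDartPath.1.leaving_dart_unique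
      (fun a ha => hin a ⟨q, hq, ha⟩) haq ha haq' ha'
    exact hPs.eq_of_mem hP hP' (Path.edge_mem_edges haP) (Path.edge_mem_edges haP')

theorem IsStLinkage.exists_splice {Z : Set V} (hPs : G.IsStLinkage s t Ps)
    (hQs : G.IsStSystem s t Qs) (hs : s ∈ Z) (ht : t ∉ Z)
    (hout : ∀ a ∈ sysDarts Ps, a.src ∈ Z → a.tgt ∉ Z → a ∈ sysDarts Qs)
    (hin : ∀ a ∈ sysDarts Qs, a.src ∉ Z → a.tgt ∉ Z) :
    ∃ Rs, G.IsStLinkage s t Rs ∧ G.edgeCut {t} ∩ G.sysEdges Rs ⊆ G.sysEdges Qs := by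
  obtain ⟨hPsys, hcov⟩ := isStLinkage_iff.1 hPs
  have hsplice (P) (hP : P ∈ Ps) := exists_isSplice hs ht (hPsys.2 P hP) hQs.2
    (fun a ha => hout a ⟨P, hP, ha⟩) hin
  choose! q hq R hR hsp using hsplice
  refine ⟨R '' Ps, isStLinkage_iff.2 ⟨⟨?_, Set.forall_mem_image.2 hR⟩, fun a has => ?_⟩, ?_⟩
  · rintro _ ⟨P, hP, rfl⟩ _ ⟨P', hP', rfl⟩ hne e he he'
    exact hne (congrArg R ((hsp P hP).eq_of_mem_edges hPsys.1 hQs hin hP hP' (hq P hP) (hq P' hP')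
      (hsp P' hP') he he'))
  · obtain ⟨P, hP, haP⟩ := hcov a has
    have hhead := (hPsys.2 P hP).isDartPath.head?_eq_of_src_eq haP has
    exact ⟨R P, ⟨P, hP, rfl⟩, List.mem_of_head? ((hsp P hP).head?_darts.trans hhead)⟩
  · rintro e ⟨het, heR⟩
    obtain ⟨b, ⟨_, ⟨P, hP, rfl⟩, hb⟩, rfl⟩ := mem_sysEdges_iff_exists_dart.1 heR
    rcases (hsp P hP).mem_darts b hb with ⟨-, hbs, hbt⟩ | ⟨hbq, -⟩
    · rcases Dart.edge_mem_edgeCut_singleton.1 het with rfl | rfl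
      exacts [absurd hbs ht, absurd hbt ht]
    · exact edge_mem_sysEdges ⟨q P, hq P hP, hbq⟩

/-! ### Exchanging an edge at `t` -/

/-- The vertices reachable from `s` by a walk all of whose darts lie in `D`. -/
def reachSet (D : Set G.Dart) (s : V) : Set V :=
  {v | ∃ l, IsDartWalk s l v ∧ ∀ a ∈ l, a ∈ D}

lemma start_mem_reachSet (D : Set G.Dart) (s : V) : s ∈ reachSet D s :=
  ⟨[], rfl, by simp⟩

lemma tgt_mem_reachSet {D : Set G.Dart} (ha : a ∈ D) (h : a.src ∈ reachSet D s) :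
    a.tgt ∈ reachSet D s := by
  obtain ⟨l, hl, hlD⟩ := h
  refine ⟨l ++ [a], isDartWalk_append.2 ⟨a.src, hl, rfl, rfl⟩, ?_⟩
  simpa [or_imp, forall_and] using ⟨hlD, ha⟩

lemma exists_isDartPath_of_mem_reachSet {D : Set G.Dart} (h : v ∈ reachSet D s) :
    ∃ l, IsDartPath s l v ∧ ∀ a ∈ l, a ∈ D := by
  obtain ⟨l, hl, hlD⟩ := h
  obtain ⟨m, hml, hm⟩ := hl.exists_isDartPath
  exact ⟨m, hm, fun a ha => hlD a (hml ha)⟩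

lemma IsDartPath.subsingleton_edges_inter_edgeCut_end (h : IsDartPath s l t) :
    (Dart.edge '' {a | a ∈ l} ∩ G.edgeCut {t}).Subsingleton := by
  rintro _ ⟨⟨a, ha, rfl⟩, hat⟩ _ ⟨⟨b, hb, rfl⟩, hbt⟩
  have hat := (Dart.edge_mem_edgeCut_singleton.1 hat).resolve_left (h.src_ne_end ha)
  have hbt := (Dart.edge_mem_edgeCut_singleton.1 hbt).resolve_left (h.src_ne_end hb)
  rw [h.eq_of_tgt_eq ha hb (hat.trans hbt.symm)]

theorem IsStLinkage.exists_reroute {q₀ : G.Path} {W : List G.Dart} (hst : s ≠ t)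
    (hQs : G.IsStLinkage s t Qs) (hW : IsDartPath s W t)
    (hWQ : ∀ a ∈ W, a ∉ sysDarts (Qs \ {q₀})) :
    ∃ Rs, G.IsStLinkage s t Rs ∧
      G.sysEdges Rs ⊆ G.sysEdges (Qs \ {q₀}) ∪ Dart.edge '' {a | a ∈ W} := by
  obtain ⟨hQsys, hcov⟩ := isStLinkage_iff.1 hQs
  obtain ⟨Rs, hRs, hRsE, hRss⟩ := (hQsys.mono Set.sdiff_subset).exists_augment hst hW hWQ
  have hfirst {a : G.Dart} (has : a.src = s) (ha : a ∉ sysDarts (Qs \ {q₀})) :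
      q₀ ∈ Qs ∧ a ∈ q₀.darts := by
    obtain ⟨q, hq, haq⟩ := hcov a has
    obtain rfl : q = q₀ := by_contra fun hne => ha ⟨q, ⟨hq, hne⟩, haq⟩
    exact ⟨hq, haq⟩
  refine ⟨Rs, isStLinkage_iff.2 ⟨hRs, fun a has => hRss a has ?_⟩, hRsE⟩
  by_cases ha : a ∈ sysDarts (Qs \ {q₀})
  · exact Or.inl ha
  obtain ⟨w, hwW, hws⟩ := hW.exists_mem_src_eq hst
  obtain ⟨hq₀, haq₀⟩ := hfirst has ha
  have hq₀d := (hQsys.2 q₀ hq₀).isDartPath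
  have hwq₀ := (hfirst hws (hWQ w hwW)).2
  have hwa : some w = some a :=
    (hq₀d.head?_eq_of_src_eq hwq₀ hws).symm.trans (hq₀d.head?_eq_of_src_eq haq₀ has)
  exact Or.inr (Option.some.inj hwa ▸ hwW)

theorem IsStLinkage.exists_exchange {e₀ : E} (hst : s ≠ t) (hPs : G.IsStLinkage s t Ps)
    (hQs : G.IsStLinkage s t Qs) (he₀P : e₀ ∈ G.edgeCut {t} \ G.sysEdges Ps)
    (he₀Q : e₀ ∈ G.sysEdges Qs) :
    ∃ Rs, G.IsStLinkage s t Rs ∧ e₀ ∉ G.sysEdges Rs ∧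
      ((G.edgeCut {t} ∩ G.sysEdges Rs) \ G.sysEdges Qs).Subsingleton ∧
      (G.edgeCut {t} ∩ G.sysEdges Rs) \ G.sysEdges Qs ⊆ G.sysEdges Ps := by
  obtain ⟨q₀, hq₀, he₀q₀⟩ := mem_sysEdges.1 he₀Q
  have hQsys := (isStLinkage_iff.1 hQs).1
  have hQ'sys : G.IsStSystem s t (Qs \ {q₀}) := hQsys.mono Set.sdiff_subset
  have he₀Q' : e₀ ∉ G.sysEdges (Qs \ {q₀}) := hQsys.1.notMem_sysEdges_sdiff_singleton hq₀ he₀q₀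
  have hQ'Q : G.sysEdges (Qs \ {q₀}) ⊆ G.sysEdges Qs := sysEdges_mono Set.sdiff_subset
  let D : Set G.Dart :=
    {a | a.edge ∉ G.edgeCut {t} \ G.sysEdges Ps ∧ a ∉ sysDarts (Qs \ {q₀})}
  by_cases hreach : t ∈ reachSet D s
  · obtain ⟨W, hW, hWD⟩ := exists_isDartPath_of_mem_reachSet hreach
    obtain ⟨Rs, hRs, hRsE⟩ := hQs.exists_reroute hst hW fun a ha => (hWD a ha).2
    have hnew : (G.edgeCut {t} ∩ G.sysEdges Rs) \ G.sysEdges Qs ⊆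
        Dart.edge '' {a | a ∈ W} ∩ G.edgeCut {t} := fun e he =>
      ⟨(hRsE he.1.2).resolve_left fun h => he.2 (hQ'Q h), he.1.1⟩
    refine ⟨Rs, hRs, fun h => ?_, hW.subsingleton_edges_inter_edgeCut_end.anti hnew, fun e he => ?_⟩
    · obtain ⟨a, ha, rfl⟩ := (hRsE h).resolve_left he₀Q'
      exact (hWD a ha).1 he₀P
    · obtain ⟨⟨a, ha, rfl⟩, hat⟩ := hnew he
      exact not_not.1 fun haP => (hWD a ha).1 ⟨hat, haP⟩
  · have hout (a) (ha : a ∈ sysDarts Ps) (hsrc : a.src ∈ reachSet D s)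
        (htgt : a.tgt ∉ reachSet D s) : a ∈ sysDarts (Qs \ {q₀}) :=
      by_contra fun haQ => htgt <|
        tgt_mem_reachSet ⟨fun hae => hae.2 (edge_mem_sysEdges ha), haQ⟩ hsrc
    have hin (a) (ha : a ∈ sysDarts (Qs \ {q₀})) (hsrc : a.src ∉ reachSet D s) :
        a.tgt ∉ reachSet D s := fun htgt => by
      refine hsrc (tgt_mem_reachSet (a := a.symm) ⟨fun hae => ?_, hQ'sys.symm_notMem ha⟩ htgt)
      rcases Dart.edge_mem_edgeCut_singleton.1 hae.1 with hat | hat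
      exacts [hreach (hat ▸ htgt), hQ'sys.src_ne_end ha hat]
    obtain ⟨Rs, hRs, hRsQ⟩ := hPs.exists_splice hQ'sys (start_mem_reachSet D s) hreach hout hin
    have hempty : (G.edgeCut {t} ∩ G.sysEdges Rs) \ G.sysEdges Qs = ∅ :=
      Set.sdiff_eq_empty.2 (hRsQ.trans hQ'Q)
    refine ⟨Rs, hRs, fun h => he₀Q' (hRsQ ⟨he₀P.1, h⟩), ?_, ?_⟩ <;> rw [hempty]
    exacts [Set.subsingleton_empty, Set.empty_subset _]

theorem IsStLinkage.exists_missing_superset (hst : s ≠ t) (hPs : G.IsStLinkage s t Ps)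
    (hfin : (G.edgeCut {t} \ G.sysEdges Ps).Finite) (hQs : G.IsStLinkage s t Qs) :
    ∃ Rs, G.IsStLinkage s t Rs ∧ G.edgeCut {t} \ G.sysEdges Ps ⊆ G.edgeCut {t} \ G.sysEdges Rs ∧
      (G.edgeCut {t} \ G.sysEdges Qs).encard ≤ (G.edgeCut {t} \ G.sysEdges Rs).encard := by
  induction hn : ((G.edgeCut {t} \ G.sysEdges Ps) ∩ G.sysEdges Qs).ncard
    using Nat.strong_induction_on generalizing Qs with
  | _ n ih =>
    subst hn
    by_cases hsub : G.edgeCut {t} \ G.sysEdges Ps ⊆ G.edgeCut {t} \ G.sysEdges Qs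
    · exact ⟨Qs, hQs, hsub, le_rfl⟩
    obtain ⟨e₀, he₀P, he₀⟩ := Set.not_subset.1 hsub
    have he₀Q : e₀ ∈ G.sysEdges Qs := not_not.1 fun h => he₀ ⟨he₀P.1, h⟩
    obtain ⟨Rs, hRs, he₀R, hsing, hnew⟩ := hPs.exists_exchange hst hQs he₀P he₀Q
    have hlt : (G.edgeCut {t} \ G.sysEdges Ps) ∩ G.sysEdges Rs ⊂
        (G.edgeCut {t} \ G.sysEdges Ps) ∩ G.sysEdges Qs := by
      refine Set.ssubset_iff_exists.2
        ⟨fun e ⟨heP, heR⟩ => ⟨heP, ?_⟩, e₀, ⟨he₀P, he₀Q⟩, fun h => he₀R h.2⟩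
      exact not_not.1 fun heQ => heP.2 (hnew ⟨⟨heP.1, heR⟩, heQ⟩)
    have hcover : G.edgeCut {t} \ G.sysEdges Qs ⊆ ((G.edgeCut {t} \ G.sysEdges Rs) \ {e₀}) ∪
        ((G.edgeCut {t} ∩ G.sysEdges Rs) \ G.sysEdges Qs) := fun e ⟨het, heQ⟩ =>
      (em (e ∈ G.sysEdges Rs)).elim (fun heR => Or.inr ⟨⟨het, heR⟩, heQ⟩)
        (fun heR => Or.inl ⟨⟨het, heR⟩, fun h => heQ (h ▸ he₀Q)⟩)
    have hle : (G.edgeCut {t} \ G.sysEdges Qs).encard ≤ (G.edgeCut {t} \ G.sysEdges Rs).encard :=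
      calc
        _ ≤ _ := Set.encard_le_encard hcover
        _ ≤ ((G.edgeCut {t} \ G.sysEdges Rs) \ {e₀}).encard + 1 :=
          (Set.encard_union_le _ _).trans
            (add_le_add_right (Set.encard_le_one_iff_subsingleton.2 hsing) _)
        _ = _ := Set.encard_sdiff_singleton_add_one ⟨he₀P.1, he₀R⟩
    obtain ⟨Rs', hRs', hsub', hle'⟩ :=
      ih _ (Set.ncard_lt_ncard hlt (hfin.subset Set.inter_subset_left)) hRs rfl
    exact ⟨Rs', hRs', hsub', hle.trans hle'⟩

lemma setOf_exists_mem_edges (S : Set E) :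
    {e ∈ S | ∃ P ∈ Ps, e ∈ P.edges} = S ∩ G.sysEdges Ps :=
  Set.ext fun _ => and_congr_right fun _ => mem_sysEdges.symm

lemma setOf_forall_notMem_edges (S : Set E) :
    {e ∈ S | ∀ P ∈ Ps, e ∉ P.edges} = S \ G.sysEdges Ps :=
  Set.ext fun _ => and_congr_right fun _ => by simp [mem_sysEdges]

end Grapht

theorem missing_exactly_one_general {V : Type u} {E : Type v} {G : Grapht V E} {s t : V}
    (hst : s ≠ t) {Ps : Set G.Path} (hPs : G.IsStLinkage s t Ps)
    (hmin : ¬ ∃ Ps' : Set G.Path, G.IsStLinkage s t Ps' ∧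
      G.edgeCut {t} ∩ G.sysEdges Ps' ⊂ G.edgeCut {t} ∩ G.sysEdges Ps)
    {Qs : Set G.Path} (hQs : G.IsStLinkage s t Qs) :
    (G.edgeCut {t} \ G.sysEdges Qs).encard ≤ (G.edgeCut {t} \ G.sysEdges Ps).encard := by
  obtain hinf | hfin := (G.edgeCut {t} \ G.sysEdges Ps).finite_or_infinite.symm
  · exact hinf.encard_eq ▸ le_top
  obtain ⟨Rs, hRs, hsub, hle⟩ := hPs.exists_missing_superset hst hfin hQs
  refine hle.trans (Set.encard_le_encard fun e he => ⟨he.1, fun heP => hmin ⟨Rs, hRs, ?_⟩⟩)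
  refine Set.ssubset_iff_exists.2
    ⟨fun f hf => ⟨hf.1, ?_⟩, e, ⟨he.1, heP⟩, fun h => he.2 h.2⟩
  exact not_not.1 fun hfP => (hsub ⟨hf.1, hfP⟩).2 hf.2

/-- If some linkage of `s` misses exactly one edge of `δ(t)` and no linkage of `s` uses
a strictly smaller part of `δ(t)`, then every linkage of `s` misses at most one edge
of `δ(t)`. -/
theorem missing_exactly_one {V : Type u} {E : Type v} (G : Grapht V E) (s t : V)
    (hst : s ≠ t) (hT : G.T = {s, t})
    (Ps : Set G.Path) (hPs : G.IsStLinkage s t Ps)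
    (hone : ∃ e₀ : E, {e ∈ G.edgeCut {t} | ∀ P ∈ Ps, e ∉ P.edges} = {e₀})
    (hmin : ¬ ∃ Ps' : Set G.Path, G.IsStLinkage s t Ps' ∧
      {e ∈ G.edgeCut {t} | ∃ P ∈ Ps', e ∈ P.edges} ⊂
        {e ∈ G.edgeCut {t} | ∃ P ∈ Ps, e ∈ P.edges})
    (Qs : Set G.Path) (hQs : G.IsStLinkage s t Qs) :
    {e ∈ G.edgeCut {t} | ∀ P ∈ Qs, e ∉ P.edges}.Subsingleton := by
  simp only [Grapht.setOf_forall_notMem_edges, Grapht.setOf_exists_mem_edges] at hone hmin ⊢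
  obtain ⟨e₀, he₀⟩ := hone
  have hle := missing_exactly_one_general hst hPs hmin hQs
  rwa [he₀, Set.encard_singleton, Set.encard_le_one_iff_subsingleton] at hle
end

section
/- Let G=(V,E,I,T) be a grapht, let t∈T and X_t⊆V with t∈X_t, and suppose δ_G(X_t) is an Erdős-Menger t(T−t)-cut. Then X_t is boundary-linked: there is a system {P_{t,e} : e∈δ_G(X_t)} of pairwise edge-disjoint paths where e is the first edge and t the last vertex of P_{t,e}. If in addition t is linked in G, then this system can be chosen to also cover δ_G(t). -/
/-! Common definitions: graphts (multigraphs with terminals), walks, paths, cycles,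
edge cuts, inner Eulerian graphts, path systems, linkages, Erdős–Menger cuts,
restriction (edge deletion) and contraction. -/

universe u v

/-!
Both `δ(X)` and, when `t` is linked, `δ(t)` are Erdős–Menger cuts. A path of the system orthogonal
to `δ(X)`, read backwards from its edge in `δ(X)`, ends in `t`; these paths form a boundary linkage.
To cover `δ(t)` as well, play them against the paths starting with the edges of `δ(t)`, as in
Pym's linkage theorem: a stable matching between the two systems picks for each path of either
system a meeting edge, and following the first path up to that edge and the second one back to `t`
gives pairwise edge-disjoint connections from `δ(X)` to `t` that use up all of `δ(t)`.
-/

namespace ListFamily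

variable {ι κ α : Type*} {P : ι → List α} {Q : κ → List α} {R S : Set α}

/-- The elements that the lists `P i` reach if each of them stops at its first element of `S`
(which is itself reached). For two families of lists, a pair of sets `R = initialPart P S` and
`S = initialPart Q R` encodes a stable matching. -/
def initialPart (P : ι → List α) (S : Set α) : Set α :=
  {z | ∃ i l, l ++ [z] <+: P i ∧ ∀ y ∈ l, y ∉ S}

theorem antitone_initialPart (P : ι → List α) : Antitone (initialPart P) :=
  fun _ _ hST _ ⟨i, l, hl, hlT⟩ => ⟨i, l, hl, fun y hy hyS => hlT y hy (hST hyS)⟩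

theorem mem_initialPart_of_head? {i : ι} {z : α} (hz : (P i).head? = some z) :
    z ∈ initialPart P S := by
  obtain ⟨l, hl⟩ := List.head?_eq_some_iff.1 hz
  exact ⟨i, [], by simp [hl], by simp⟩

theorem mem_initialPart_of_mem_prefix {i : ι} {l : List α} {x z : α} (hl : l ++ [x] <+: P i)
    (hlS : ∀ y ∈ l, y ∉ S) (hz : z ∈ l ++ [x]) : z ∈ initialPart P S := by
  obtain ⟨l₁, l₂, hl₁⟩ := List.append_of_mem hz
  rcases List.eq_nil_or_concat l₂ with rfl | ⟨l₂, y, rfl⟩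
  · exact ⟨i, l₁, hl₁ ▸ hl, (List.append_inj' hl₁ rfl).1 ▸ hlS⟩
  · have hl₂ : l = l₁ ++ z :: l₂ :=
      (List.append_inj' (hl₁.trans (by simp : _ = (l₁ ++ z :: l₂) ++ [y])) rfl).1
    refine ⟨i, l₁, .trans ⟨l₂ ++ [x], by simp [hl₂]⟩ hl, fun y hy => hlS y ?_⟩
    simp [hl₂, hy]

theorem exists_prefix_of_mem_initialPart (hP : Pairwise fun i j => (P i).Disjoint (P j)) {i : ι}
    {z : α} (hz : z ∈ initialPart P S) (hzi : z ∈ P i) :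
    ∃ l, l ++ [z] <+: P i ∧ ∀ y ∈ l, y ∉ S := by
  obtain ⟨j, l, hl, hlS⟩ := hz
  obtain rfl : i = j := by
    by_contra hij
    exact hP hij hzi (hl.subset (by simp))
  exact ⟨l, hl, hlS⟩

theorem eq_of_mem_initialPart (hP : Pairwise fun i j => (P i).Disjoint (P j)) {i : ι} {y z : α}
    (hy : y ∈ initialPart P S) (hyS : y ∈ S) (hyi : y ∈ P i)
    (hz : z ∈ initialPart P S) (hzS : z ∈ S) (hzi : z ∈ P i) : y = z := by
  obtain ⟨l, hl, hlS⟩ := exists_prefix_of_mem_initialPart hP hy hyi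
  obtain ⟨m, hm, hmS⟩ := exists_prefix_of_mem_initialPart hP hz hzi
  rcases List.prefix_or_prefix_of_prefix hl hm with h | h <;>
    rcases List.prefix_concat_iff.1 h with h | h
  · exact List.singleton_inj.1 (List.append_inj' h rfl).2
  · exact absurd hyS (hmS y (h.subset (by simp)))
  · exact (List.singleton_inj.1 (List.append_inj' h rfl).2).symm
  · exact absurd hzS (hlS z (h.subset (by simp)))

theorem exists_first_mem {l : List α} (h : ∃ x ∈ l, x ∈ S) :
    ∃ x ∈ S, ∃ m, m ++ [x] <+: l ∧ ∀ y ∈ m, y ∉ S := by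
  classical
  obtain ⟨x, hx⟩ : ∃ x, l.find? (· ∈ S) = some x := by
    simpa [← Option.isSome_iff_exists] using h
  obtain ⟨hxS, m, n, rfl, hm⟩ := List.find?_eq_some_iff_append.1 hx
  exact ⟨x, by simpa using hxS, m, ⟨n, by simp⟩, by simpa using hm⟩

theorem exists_stable_pair (P : ι → List α) (Q : κ → List α) :
    ∃ R S : Set α, initialPart P S = R ∧ initialPart Q R = S :=
  let Φ : Set α →o Set α :=
    ⟨initialPart Q ∘ initialPart P, (antitone_initialPart Q).comp (antitone_initialPart P)⟩
  ⟨_, Φ.lfp, rfl, Φ.map_lfp⟩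

theorem exists_meeting_prefixes_of_stable (hR : initialPart P S = R) (hS : initialPart Q R = S)
    {i : ι} (hi : ∃ j, ∃ b ∈ P i, (Q j).head? = some b) :
    ∃ j x p q, x ∈ R ∧ x ∈ S ∧ p ++ [x] <+: P i ∧ q ++ [x] <+: Q j ∧
      (∀ y ∈ p ++ [x], y ∈ R) ∧ ∀ y ∈ q ++ [x], y ∈ S := by
  obtain ⟨j, b, hb, hbj⟩ := hi
  obtain ⟨x, hxS, p, hp, hpS⟩ := exists_first_mem ⟨b, hb, hS ▸ mem_initialPart_of_head? hbj⟩
  obtain ⟨k, q, hq, hqR⟩ := hS.symm ▸ hxS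
  have hpR : ∀ y ∈ p ++ [x], y ∈ R := fun y hy => hR ▸ mem_initialPart_of_mem_prefix hp hpS hy
  exact ⟨k, x, p, q, hpR x (by simp), hxS, hp, hq, hpR,
    fun y hy => hS ▸ mem_initialPart_of_mem_prefix hq hqR hy⟩

theorem exists_disjoint_meeting_prefixes (hP : Pairwise fun i j => (P i).Disjoint (P j))
    (hQ : Pairwise fun i j => (Q i).Disjoint (Q j))
    (hPQ : ∀ i, ∃ j, ∃ b ∈ P i, (Q j).head? = some b)
    (hQP : ∀ j, ∃ i, ∃ a ∈ Q j, (P i).head? = some a) :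
    ∃ (β : ι → κ) (p q : ι → List α), β.Surjective ∧ (∀ i, p i <+: P i) ∧
      (∀ i, q i <+: Q (β i)) ∧ (∀ i, ∃ x ∈ p i, x ∈ q i) ∧
      Pairwise fun i j => (p i ++ q i).Disjoint (p j ++ q j) := by
  obtain ⟨R, S, hR, hS⟩ := exists_stable_pair P Q
  choose β x p q hxR hxS hp hq hpR hqS using
    fun i => exists_meeting_prefixes_of_stable hR hS (hPQ i)
  have hxP : ∀ i, x i ∈ P i := fun i => (hp i).subset (by simp)
  have hxQ : ∀ i, x i ∈ Q (β i) := fun i => (hq i).subset (by simp)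
  have eq_x_of_mem_P : ∀ {i z}, z ∈ R → z ∈ S → z ∈ P i → z = x i := fun hzR hzS hz =>
    eq_of_mem_initialPart hP (hR ▸ hzR) hzS hz (hR ▸ hxR _) (hxS _) (hxP _)
  have eq_x_of_mem_Q : ∀ {i z}, z ∈ R → z ∈ S → z ∈ Q (β i) → z = x i := fun hzR hzS hz =>
    eq_of_mem_initialPart hQ (hS ▸ hzS) hzR hz (hS ▸ hxS _) (hxR _) (hxQ _)
  have mixed : ∀ {i j z}, z ∈ p i ++ [x i] → z ∈ q j ++ [x j] → z ∈ P j := fun hzp hzq =>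
    eq_x_of_mem_Q (hpR _ _ hzp) (hqS _ _ hzq) ((hq _).subset hzq) ▸ hxP _
  refine ⟨β, fun i => p i ++ [x i], fun i => q i ++ [x i], fun j => ?_, hp, hq,
    fun i => ⟨x i, by simp, by simp⟩, fun i j hij z hzi hzj => ?_⟩
  · obtain ⟨i, a, ha, hai⟩ := hQP j
    obtain ⟨y, hyR, l, hl, hlR⟩ := exists_first_mem ⟨a, ha, hR ▸ mem_initialPart_of_head? hai⟩
    have hyS : y ∈ S := hS ▸ ⟨j, l, hl, hlR⟩
    obtain ⟨k, m, hm, -⟩ := hR.symm ▸ hyR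
    obtain rfl : y = x k := eq_x_of_mem_P hyR hyS (hm.subset (by simp))
    by_contra! hβ
    exact hQ (hβ k) (hxQ k) (hl.subset (by simp))
  · rcases List.mem_append.1 hzi with hzi | hzi <;> rcases List.mem_append.1 hzj with hzj | hzj
    · exact hP hij ((hp i).subset hzi) ((hp j).subset hzj)
    · exact hP hij ((hp i).subset hzi) (mixed hzi hzj)
    · exact hP hij (mixed hzj hzi) ((hp j).subset hzj)
    · have hβ : β j = β i := by
        by_contra hβ
        exact hQ hβ ((hq j).subset hzj) ((hq i).subset hzi)
      have hx : x j = x i := eq_x_of_mem_Q (hxR j) (hxS j) (hβ ▸ hxQ j)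
      exact hP hij (hxP i) (hx ▸ hxP j)

theorem mem_of_prefix_of_head? {l m : List α} {a x : α} (h : l <+: m) (hx : x ∈ l)
    (hm : m.head? = some a) : a ∈ l := by
  obtain ⟨y, l, rfl⟩ := List.exists_cons_of_ne_nil (List.ne_nil_of_mem hx)
  obtain ⟨n, rfl⟩ := h
  obtain rfl : y = a := Option.some.inj hm
  exact List.mem_cons_self

end ListFamily

namespace Grapht

variable {V : Type u} {E : Type v} {G : Grapht V E} {A B X : Set V}

theorem mem_edgeCut_iff {e : E} :
    e ∈ G.edgeCut X ↔ (∃ u ∈ G.I e, u ∈ X) ∧ ∃ w ∈ G.I e, w ∉ X := by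
  refine ⟨fun ⟨u, w, he, hu, hw⟩ => by simp [he, hu, hw], ?_⟩
  rintro ⟨⟨u, hue, hu⟩, w, hwe, hw⟩
  exact ⟨u, w, (Sym2.mem_and_mem_iff (ne_of_mem_of_not_mem hu hw)).1 ⟨hue, hwe⟩, hu, hw⟩

namespace IsWalk

variable {vs : List V} {es : List E}

theorem mem_verts (h : G.IsWalk vs es) {e : E} (he : e ∈ es) {v : V} (hv : v ∈ G.I e) :
    v ∈ vs := by
  induction h with
  | nil => simp at he
  | cons hI _ ih =>
    rcases List.mem_cons.1 he with rfl | he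
    · rcases Sym2.mem_iff.1 (hI ▸ hv) with rfl | rfl <;> simp
    · exact List.mem_cons_of_mem _ (ih he)

theorem head?_eq_of_notMem_tail (h : G.IsWalk vs es) {e : E} (he : e ∈ es) {v : V}
    (hv : v ∈ G.I e) (hvs : v ∉ vs.tail) : es.head? = some e := by
  cases h with
  | nil => simp at he
  | cons _ h =>
    rcases List.mem_cons.1 he with rfl | he
    · rfl
    · exact absurd (h.mem_verts he hv) hvs

theorem concat (h : G.IsWalk vs es) {u w : V} {e : E} (hu : vs.getLast? = some u)
    (he : G.I e = s(u, w)) : G.IsWalk (vs ++ [w]) (es ++ [e]) := by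
  induction h with
  | nil =>
    obtain rfl := Option.some.inj hu
    exact .cons he (.nil _)
  | cons hI _ ih => exact .cons hI (ih (by simpa using hu))

theorem reverse (h : G.IsWalk vs es) : G.IsWalk vs.reverse es.reverse := by
  induction h with
  | nil => exact .nil _
  | cons hI _ ih =>
    simpa only [List.reverse_cons] using
      ih.concat (by simp only [List.getLast?_reverse, List.head?_cons]) (hI.trans Sym2.eq_swap)

theorem exists_of_prefix (h : G.IsWalk vs es) {es' : List E} (hes : es' <+: es) :
    ∃ vs', G.IsWalk vs' es' ∧ vs'.head? = vs.head? := by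
  induction h generalizing es' with
  | nil v =>
    obtain rfl := List.prefix_nil.1 hes
    exact ⟨[v], .nil v, rfl⟩
  | @cons u w _ _ _ hI _ ih =>
    rcases List.prefix_cons_iff.1 hes with rfl | ⟨t, rfl, ht⟩
    · exact ⟨[u], .nil u, rfl⟩
    · obtain ⟨vs', h', hw⟩ := ih ht
      obtain ⟨ws, rfl⟩ := List.head?_eq_some_iff.1 hw
      exact ⟨u :: w :: ws, .cons hI h', rfl⟩

theorem exists_suffix_head?_mem_edgeCut (h : G.IsWalk vs es) {v w : V} (hv : v ∈ vs)
    (hvX : v ∉ X) (hw : vs.getLast? = some w) (hwX : w ∈ X) :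
    ∃ vs' es', vs' <:+ vs ∧ es' <:+ es ∧ G.IsWalk vs' es' ∧
      ∃ e ∈ G.edgeCut X, es'.head? = some e := by
  induction h generalizing v with
  | nil =>
    obtain rfl := List.mem_singleton.1 hv
    exact absurd ((Option.some.inj hw : v = w) ▸ hwX) hvX
  | @cons a b vs e es hI h ih =>
    by_cases hout : ∃ x ∈ b :: vs, x ∉ X
    · obtain ⟨x, hx, hxX⟩ := hout
      obtain ⟨vs', es', hvs, hes, h', he⟩ := ih hx hxX (by simpa using hw)
      exact ⟨vs', es', hvs.trans (List.suffix_cons _ _), hes.trans (List.suffix_cons _ _), h', he⟩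
    · push Not at hout
      obtain rfl : v = a := (List.mem_cons.1 hv).resolve_right fun hv => hvX (hout v hv)
      exact ⟨_, _, List.suffix_refl _, List.suffix_refl _, .cons hI h, e,
        ⟨b, v, hI.trans Sym2.eq_swap, hout b (by simp), hvX⟩, rfl⟩

end IsWalk

/-- The simple graph formed by the edges in `F`, which makes connectivity within an edge set
available as `SimpleGraph.Reachable`. -/
def simpleGraph (G : Grapht V E) (F : Set E) : SimpleGraph V :=
  .fromEdgeSet (G.I '' F)

theorem IsWalk.reachable {vs : List V} {es : List E} (h : G.IsWalk vs es) {F : Set E}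
    (hF : ∀ e ∈ es, e ∈ F) {u v : V} (hu : u ∈ vs) (hv : v ∈ vs) :
    (G.simpleGraph F).Reachable u v := by
  induction h generalizing u v with
  | nil =>
    rw [List.mem_singleton.1 hu, List.mem_singleton.1 hv]
  | @cons a b vs e es hI _ ih =>
    have hne : a ≠ b := fun hab => G.loopless e (hI ▸ Sym2.mk_isDiag_iff.2 hab)
    have hadj : (G.simpleGraph F).Adj a b :=
      (SimpleGraph.fromEdgeSet_adj _).2 ⟨⟨e, hF e (by simp), hI⟩, hne⟩
    have hreach : ∀ x ∈ a :: b :: vs, (G.simpleGraph F).Reachable b x := fun x hx => by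
      rcases List.mem_cons.1 hx with rfl | hx
      · exact hadj.symm.reachable
      · exact ih (fun e he => hF e (List.mem_cons_of_mem _ he)) (by simp) hx
    exact (hreach u hu).symm.trans (hreach v hv)

theorem exists_isWalk_support {F : Set E} {u v : V} (w : (G.simpleGraph F).Walk u v) :
    ∃ es, G.IsWalk w.support es ∧ ∀ e ∈ es, e ∈ F := by
  induction w with
  | nil => exact ⟨[], .nil _, by simp⟩
  | cons hadj w ih =>
    obtain ⟨es, hes, hF⟩ := ih
    obtain ⟨⟨e, he, hI⟩, -⟩ := (SimpleGraph.fromEdgeSet_adj _).1 hadj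
    rw [← w.cons_tail_support] at hes
    rw [SimpleGraph.Walk.support_cons, ← w.cons_tail_support]
    exact ⟨e :: es, .cons hI hes, by simpa using ⟨he, hF⟩⟩

theorem exists_path_of_reachable {F : Set E} {u v : V} (h : (G.simpleGraph F).Reachable u v) :
    ∃ p : G.Path, p.first = u ∧ p.last = v ∧ ∀ e ∈ p.edges, e ∈ F := by
  obtain ⟨w, hw⟩ := h.exists_isPath
  obtain ⟨es, hes, hF⟩ := exists_isWalk_support w
  have hlast : w.support.getLast? = some v := by
    rw [List.getLast?_eq_some_getLast w.support_ne_nil, w.getLast_support]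
  have hhead : w.support.head? = some u := by
    rw [← w.cons_tail_support, List.head?_cons]
  exact ⟨⟨u, v, w.support, es, hes, hw.support_nodup, hhead, hlast⟩, rfl, rfl, hF⟩

namespace Path

/-- The path consisting of the single vertex `v`. -/
def single (G : Grapht V E) (v : V) : G.Path where
  first := v
  last := v
  verts := [v]
  edges := []
  isWalk := .nil v
  nodup := List.nodup_singleton v
  head_eq := rfl
  getLast_eq := rfl

/-- The path `p` traversed backwards. -/
def reverse (p : G.Path) : G.Path where
  first := p.last
  last := p.first
  verts := p.verts.reverse
  edges := p.edges.reverse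
  isWalk := p.isWalk.reverse
  nodup := List.nodup_reverse.2 p.nodup
  head_eq := List.head?_reverse.trans p.getLast_eq
  getLast_eq := List.getLast?_reverse.trans p.head_eq

theorem inner_reverse (p : G.Path) : p.reverse.inner = p.inner.reverse := by
  simp only [inner, reverse, List.drop_one, List.tail_reverse, List.dropLast_reverse,
    List.tail_dropLast]

theorem first_mem (p : G.Path) : p.first ∈ p.verts :=
  List.mem_of_head? p.head_eq

theorem mem_inner_or_eq_last {p : G.Path} {v : V} (hv : v ∈ p.verts.tail) :
    v ∈ p.inner ∨ v = p.last := by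
  have htail : p.verts.tail.getLast? = some p.last := by
    obtain ⟨vs, hvs⟩ := List.head?_eq_some_iff.1 p.head_eq
    have hne : vs ≠ [] := by rintro rfl; simp [hvs] at hv
    rw [← p.getLast_eq, hvs, List.tail_cons, List.getLast?_cons_of_ne_nil hne]
  rw [inner, List.drop_one, or_iff_not_imp_right]
  exact fun hne => List.mem_dropLast_of_mem_of_ne_getLast? hv (by simpa [htail] using hne)

theorem exists_subpath_head?_mem_edgeCut (p : G.Path) {v : V} (hv : v ∈ p.verts) (hvX : v ∉ X)
    (hlast : p.last ∈ X) :
    ∃ q : G.Path, q.last = p.last ∧ q.edges ⊆ p.edges ∧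
      ∃ e ∈ G.edgeCut X, q.edges.head? = some e := by
  obtain ⟨vs, es, hvs, hes, h, e, he, hhead⟩ :=
    p.isWalk.exists_suffix_head?_mem_edgeCut hv hvX p.getLast_eq hlast
  obtain ⟨u, hu⟩ : ∃ u, vs.head? = some u := by cases h <;> exact ⟨_, rfl⟩
  have hlast : vs.getLast? = some p.last := by
    have hne : vs ≠ [] := by rintro rfl; cases hu
    rw [← p.getLast_eq, List.getLast?_eq_some_getLast hne, hvs.getLast hne,
      List.getLast?_eq_some_getLast]
  exact ⟨⟨u, p.last, vs, es, h, p.nodup.sublist hvs.sublist, hu, hlast⟩, rfl, hes.subset,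
    e, he, hhead⟩

theorem exists_mem_edgeCut (p : G.Path) {v : V} (hv : v ∈ p.verts) (hvX : v ∉ X)
    (hlast : p.last ∈ X) : ∃ e ∈ G.edgeCut X, e ∈ p.edges := by
  obtain ⟨q, -, hqp, e, he, hhead⟩ := p.exists_subpath_head?_mem_edgeCut hv hvX hlast
  exact ⟨e, he, hqp (List.mem_of_head? hhead)⟩

theorem exists_path_of_meeting {p q : G.Path} {l m : List E} (hl : l <+: p.edges)
    (hm : m <+: q.edges) {x a b : E} (hxl : x ∈ l) (hxm : x ∈ m) (ha : a ∈ l) (hb : b ∈ m)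
    {u v : V} (hu : u ∈ G.I a) (hv : v ∈ G.I b) :
    ∃ r : G.Path, r.first = u ∧ r.last = v ∧ r.edges ⊆ l ++ m := by
  obtain ⟨vs, hvs, -⟩ := p.isWalk.exists_of_prefix hl
  obtain ⟨ws, hws, -⟩ := q.isWalk.exists_of_prefix hm
  obtain ⟨z, hz⟩ : ∃ z, z ∈ G.I x := ⟨_, Sym2.out_fst_mem _⟩
  have huz : (G.simpleGraph {e | e ∈ l ++ m}).Reachable u z :=
    hvs.reachable (fun e he => List.mem_append_left _ he) (hvs.mem_verts ha hu)
      (hvs.mem_verts hxl hz)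
  have hzv : (G.simpleGraph {e | e ∈ l ++ m}).Reachable z v :=
    hws.reachable (fun e he => List.mem_append_right _ he) (hws.mem_verts hxm hz)
      (hws.mem_verts hb hv)
  exact exists_path_of_reachable (huz.trans hzv)

end Path

theorem IsABCut.disjoint {C : Set E} (hC : G.IsABCut A B C) : Disjoint A B := by
  refine Set.disjoint_left.2 fun v hA hB => ?_
  obtain ⟨e, -, he⟩ := hC (.single G v) ⟨hA, hB, by simp [Path.inner, Path.single]⟩
  simp [Path.single] at he

theorem IsABPath.head?_eq_of_mem_edgeCut {p : G.Path} (hp : G.IsABPath A B p)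
    (hAB : Disjoint A B) {e : E} (he : e ∈ G.edgeCut A) (hep : e ∈ p.edges) :
    p.edges.head? = some e := by
  obtain ⟨⟨v, hve, hvA⟩, -⟩ := mem_edgeCut_iff.1 he
  have hv : v ∉ p.verts.tail := fun hv => by
    rcases Path.mem_inner_or_eq_last hv with hv | rfl
    · exact hp.2.2 v hv (.inl hvA)
    · exact hAB.notMem_of_mem_left hvA hp.2.1
  exact p.isWalk.head?_eq_of_notMem_tail hep hve hv

theorem IsTPath.reverse {p : G.Path} (hp : G.IsTPath p) : G.IsTPath p.reverse :=
  ⟨hp.2.1, hp.1, hp.2.2.1.symm, by simpa [Path.inner_reverse] using hp.2.2.2⟩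

theorem IsTPath.isABPath_first {p : G.Path} (hp : G.IsTPath p) :
    G.IsABPath {p.first} (G.T \ {p.first}) p :=
  ⟨rfl, ⟨hp.2.1, hp.2.2.1.symm⟩, fun v hv hvT =>
    hp.2.2.2 v hv (hvT.elim (fun h => h ▸ hp.1) And.left)⟩

theorem IsTPath.exists_isABPath {p : G.Path} (hp : G.IsTPath p) {t : V} (ht : t ∈ G.T)
    (htp : t ∈ p.verts) :
    ∃ q : G.Path, G.IsABPath {t} (G.T \ {t}) q ∧ ∀ e, e ∈ q.edges ↔ e ∈ p.edges := by
  obtain ⟨vs, hvs⟩ := List.head?_eq_some_iff.1 p.head_eq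
  have hor : t = p.first ∨ t = p.last := by
    rw [hvs, List.mem_cons] at htp
    refine htp.imp_right fun h => ?_
    exact (Path.mem_inner_or_eq_last (by simpa [hvs] using h)).resolve_left fun h => hp.2.2.2 t h ht
  rcases hor with rfl | rfl
  · exact ⟨p, hp.isABPath_first, fun _ => .rfl⟩
  · exact ⟨p.reverse, hp.reverse.isABPath_first, fun _ => List.mem_reverse⟩

theorem isABCut_edgeCut_left (hAB : Disjoint A B) : G.IsABCut A B (G.edgeCut A) := fun p hp => by
  obtain ⟨e, he, hep⟩ := p.reverse.exists_mem_edgeCut (X := A) p.reverse.first_mem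
    (hAB.notMem_of_mem_right hp.2.1) hp.1
  exact ⟨e, he, List.mem_reverse.1 hep⟩

theorem orthogonal_edgeCut_left (hAB : Disjoint A B) {Ps : Set G.Path}
    (hPs : ∀ p ∈ Ps, G.IsABPath A B p) (hcov : ∀ e ∈ G.edgeCut A, ∃ p ∈ Ps, e ∈ p.edges) :
    G.Orthogonal (G.edgeCut A) Ps := by
  refine ⟨fun p hp => ?_, hcov⟩
  obtain ⟨e, he, hep⟩ := isABCut_edgeCut_left hAB p (hPs p hp)
  refine ⟨e, ⟨he, hep⟩, fun f ⟨hf, hfp⟩ => Option.some.inj ?_⟩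
  rw [← (hPs p hp).head?_eq_of_mem_edgeCut hAB hf hfp,
    (hPs p hp).head?_eq_of_mem_edgeCut hAB he hep]

theorem Linked.isEMABCut {t : V} (h : G.Linked t) (ht : t ∈ G.T) :
    G.IsEMABCut {t} (G.T \ {t}) (G.edgeCut {t}) := by
  obtain ⟨Ps, ⟨hPs, hT⟩, hcov⟩ := h
  have : Nonempty G.Path := ⟨.single G t⟩
  choose! q hq hqe using fun p (hp : p ∈ {p ∈ Ps | t ∈ p.verts}) =>
    (hT p hp.1).exists_isABPath ht hp.2
  have hdisj : Disjoint {t} (G.T \ {t}) := Set.disjoint_sdiff_right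
  refine ⟨isABCut_edgeCut_left hdisj, q '' {p ∈ Ps | t ∈ p.verts}, ?_, ?_,
    orthogonal_edgeCut_left hdisj ?_ ?_⟩
  · rintro _ ⟨p, hp, rfl⟩ _ ⟨p', hp', rfl⟩ hne e he he'
    exact hPs hp.1 hp'.1 (fun h => hne (congrArg q h)) e ((hqe p hp e).1 he) ((hqe p' hp' e).1 he')
  · exact Set.forall_mem_image.2 hq
  · exact Set.forall_mem_image.2 hq
  · intro e he
    obtain ⟨p, hp, hep⟩ := hcov e he
    obtain ⟨⟨v, hve, rfl⟩, -⟩ := mem_edgeCut_iff.1 he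
    have hpv : p ∈ {p ∈ Ps | v ∈ p.verts} := ⟨hp, p.isWalk.mem_verts hep hve⟩
    exact ⟨q p, Set.mem_image_of_mem q hpv, (hqe p hpv e).2 hep⟩

/-- A system `{P e : e ∈ C}` of pairwise edge-disjoint paths in which `e` is the first edge of
`P e`. The values of `P` outside `C` are irrelevant. -/
structure IsPathSystemFrom (G : Grapht V E) (C : Set E) (P : E → G.Path) : Prop where
  disjoint : C.Pairwise fun e f => (P e).edges.Disjoint (P f).edges
  head? : ∀ e ∈ C, (P e).edges.head? = some e

/-- The system of paths witnessing that `X` is boundary-linked to the target set `A`. -/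
structure IsBoundaryLinkage (G : Grapht V E) (X A : Set V) (P : E → G.Path) : Prop
    extends G.IsPathSystemFrom (G.edgeCut X) P where
  last_mem : ∀ e ∈ G.edgeCut X, (P e).last ∈ A

theorem IsPathSystemFrom.mem_edges {C : Set E} {P : E → G.Path} (hP : G.IsPathSystemFrom C P)
    {e : E} (he : e ∈ C) : e ∈ (P e).edges :=
  List.mem_of_head? (hP.head? e he)

theorem IsPathSystemFrom.pairwise_subtype {C : Set E} {P : E → G.Path}
    (hP : G.IsPathSystemFrom C P) :
    Pairwise fun e f : C => (P e).edges.Disjoint (P f).edges :=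
  fun e f hef => hP.disjoint e.2 f.2 (Subtype.coe_ne_coe.2 hef)

theorem exists_path_family {C : Set E} {φ : C → G.Path → Prop} (h : ∀ e, ∃ p, φ e p) :
    ∃ P : E → G.Path, ∀ e : C, φ e (P e) := by
  classical
  choose P hP using h
  exact ⟨fun e => if he : e ∈ C then P ⟨e, he⟩ else .single G (G.I e).out.1,
    fun e => by simpa only [e.2, dif_pos] using hP e⟩

theorem Orthogonal.exists_isPathSystemFrom {C : Set E} {Ps : Set G.Path} (hC : G.Orthogonal C Ps)
    (hPs : G.EdgeDisjoint Ps) {φ : G.Path → Prop}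
    (h : ∀ p ∈ Ps, ∃ q : G.Path, q.edges ⊆ p.edges ∧ (∃ e ∈ C, q.edges.head? = some e) ∧ φ q) :
    ∃ P, G.IsPathSystemFrom C P ∧ ∀ e ∈ C, φ (P e) := by
  have hsub : ∀ e : C, ∃ q : G.Path, q.edges.head? = some ↑e ∧ φ q ∧
      ∃ p ∈ Ps, ↑e ∈ p.edges ∧ q.edges ⊆ p.edges := fun ⟨e, he⟩ => by
    obtain ⟨p, hp, hep⟩ := hC.2 e he
    obtain ⟨q, hqp, ⟨f, hf, hfq⟩, hq⟩ := h p hp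
    obtain rfl : f = e := (hC.1 p hp).unique ⟨hf, hqp (List.mem_of_head? hfq)⟩ ⟨he, hep⟩
    exact ⟨q, hfq, hq, p, hp, hep, hqp⟩
  obtain ⟨P, hP⟩ := exists_path_family hsub
  refine ⟨P, ⟨fun e he f hf hef g hge hgf => ?_, fun e he => (hP ⟨e, he⟩).1⟩,
    fun e he => (hP ⟨e, he⟩).2.1⟩
  obtain ⟨-, -, p, hp, hep, hPe⟩ := hP ⟨e, he⟩
  obtain ⟨-, -, q, hq, hfq, hPf⟩ := hP ⟨f, hf⟩
  have hpq : p ≠ q := by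
    rintro rfl
    exact hef ((hC.1 p hp).unique ⟨he, hep⟩ ⟨hf, hfq⟩)
  exact hPs hp hq hpq g (hPe hge) (hPf hgf)

theorem IsEMABCut.exists_isBoundaryLinkage (h : G.IsEMABCut A B (G.edgeCut X)) (hAX : A ⊆ X) :
    ∃ P, G.IsBoundaryLinkage X A P := by
  obtain ⟨-, Ps, hPs, hAB, horth⟩ := h
  obtain ⟨P, hP, hlast⟩ := horth.exists_isPathSystemFrom hPs (φ := fun q => q.last ∈ A)
    fun p hp => by
      obtain ⟨e, he, hep⟩ := (horth.1 p hp).exists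
      obtain ⟨-, w, hwe, hw⟩ := mem_edgeCut_iff.1 he
      obtain ⟨q, hlast, hqp, hhead⟩ := p.reverse.exists_subpath_head?_mem_edgeCut
        (List.mem_reverse.2 (p.isWalk.mem_verts hep hwe)) hw (hAX (hAB p hp).1)
      exact ⟨q, fun e he => List.mem_reverse.1 (hqp he), hhead, hlast ▸ (hAB p hp).1⟩
  exact ⟨P, hP, hlast⟩

theorem IsEMABCut.exists_isPathSystemFrom (h : G.IsEMABCut A B (G.edgeCut A)) {C : Set E}
    (hC : G.IsABCut A B C) :
    ∃ Q, G.IsPathSystemFrom (G.edgeCut A) Q ∧ ∀ e ∈ G.edgeCut A, ∃ c ∈ C, c ∈ (Q e).edges := by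
  obtain ⟨-, Qs, hQs, hAB, horth⟩ := h
  refine horth.exists_isPathSystemFrom hQs (φ := fun q => ∃ c ∈ C, c ∈ q.edges) fun q hq => ?_
  obtain ⟨e, he, heq⟩ := (horth.1 q hq).exists
  exact ⟨q, List.Subset.refl _, ⟨e, he, (hAB q hq).head?_eq_of_mem_edgeCut hC.disjoint he heq⟩,
    hC q (hAB q hq)⟩

theorem IsBoundaryLinkage.exists_mem_edgeCut {P : E → G.Path} (hP : G.IsBoundaryLinkage X A P)
    (hAX : A ⊆ X) {e : E} (he : e ∈ G.edgeCut X) : ∃ f ∈ G.edgeCut A, f ∈ (P e).edges := by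
  obtain ⟨-, w, hwe, hw⟩ := mem_edgeCut_iff.1 he
  exact (P e).exists_mem_edgeCut ((P e).isWalk.mem_verts (hP.mem_edges he) hwe)
    (fun hwA => hw (hAX hwA)) (hP.last_mem e he)

theorem exists_isBoundaryLinkage_of_connections (hAX : A ⊆ X) {F : G.edgeCut X → List E}
    (hF : Pairwise fun e f => (F e).Disjoint (F f)) (hmem : ∀ e, ↑e ∈ F e)
    (hconn : ∀ e, ∃ r : G.Path, r.first ∉ X ∧ r.last ∈ A ∧ r.edges ⊆ F e) :
    ∃ R, G.IsBoundaryLinkage X A R ∧ ∀ e : G.edgeCut X, (R e).edges ⊆ F e := by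
  have hstart : ∀ e : G.edgeCut X, ∃ q : G.Path, q.edges.head? = some ↑e ∧ q.last ∈ A ∧
      q.edges ⊆ F e := fun e => by
    obtain ⟨r, hfirst, hlast, hrF⟩ := hconn e
    obtain ⟨q, hq, hqr, f, hf, hfq⟩ :=
      r.exists_subpath_head?_mem_edgeCut r.first_mem hfirst (hAX hlast)
    obtain rfl : e = ⟨f, hf⟩ := by
      by_contra hef
      exact hF hef (hrF (hqr (List.mem_of_head? hfq))) (hmem ⟨f, hf⟩)
    exact ⟨q, hfq, hq ▸ hlast, List.Subset.trans hqr hrF⟩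
  obtain ⟨R, hR⟩ := exists_path_family hstart
  have hdisj : ∀ e f : G.edgeCut X, e ≠ f → (R e).edges.Disjoint (R f).edges :=
    fun e f hef g hge hgf => hF hef ((hR e).2.2 hge) ((hR f).2.2 hgf)
  exact ⟨R, ⟨⟨fun e he f hf hef => hdisj ⟨e, he⟩ ⟨f, hf⟩ (Subtype.coe_ne_coe.1 hef),
    fun e he => (hR ⟨e, he⟩).1⟩, fun e he => (hR ⟨e, he⟩).2.1⟩, fun e => (hR e).2.2⟩

theorem IsBoundaryLinkage.exists_covering {P Q : E → G.Path} (hP : G.IsBoundaryLinkage X A P)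
    (hQ : G.IsPathSystemFrom (G.edgeCut A) Q) (hAX : A ⊆ X)
    (hQX : ∀ b ∈ G.edgeCut A, ∃ a ∈ G.edgeCut X, a ∈ (Q b).edges) :
    ∃ R, G.IsBoundaryLinkage X A R ∧
      ∀ b ∈ G.edgeCut A, ∃ a ∈ G.edgeCut X, b ∈ (R a).edges := by
  obtain ⟨β, p, q, hβ, hp, hq, hpq, hdisj⟩ :=
    ListFamily.exists_disjoint_meeting_prefixes hP.pairwise_subtype hQ.pairwise_subtype
      (fun a => let ⟨b, hb, hba⟩ := hP.exists_mem_edgeCut hAX a.2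
        ⟨⟨b, hb⟩, b, hba, hQ.head? b hb⟩)
      (fun b => let ⟨a, ha, hab⟩ := hQX b b.2
        ⟨⟨a, ha⟩, a, hab, hP.head? a ha⟩)
  have hmem_p : ∀ a, ↑a ∈ p a := fun a =>
    let ⟨_, hx, _⟩ := hpq a
    ListFamily.mem_of_prefix_of_head? (hp a) hx (hP.head? a a.2)
  have hmem_q : ∀ a, ↑(β a) ∈ q a := fun a =>
    let ⟨_, _, hx⟩ := hpq a
    ListFamily.mem_of_prefix_of_head? (hq a) hx (hQ.head? (β a) (β a).2)
  obtain ⟨R, hR, hRpq⟩ := exists_isBoundaryLinkage_of_connections hAX hdisj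
    (fun a => List.mem_append_left _ (hmem_p a)) fun a => by
      obtain ⟨-, u, hu, huX⟩ := mem_edgeCut_iff.1 a.2
      obtain ⟨⟨v, hv, hvA⟩, -⟩ := mem_edgeCut_iff.1 (β a).2
      obtain ⟨x, hxp, hxq⟩ := hpq a
      obtain ⟨r, rfl, rfl, hr⟩ :=
        Path.exists_path_of_meeting (hp a) (hq a) hxp hxq (hmem_p a) (hmem_q a) hu hv
      exact ⟨r, huX, hvA, hr⟩
  refine ⟨R, hR, fun b hb => ?_⟩
  obtain ⟨a, ha⟩ := hβ ⟨b, hb⟩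
  obtain ⟨c, hc, hcR⟩ := hR.exists_mem_edgeCut hAX a.2
  obtain ⟨a', ha'⟩ := hβ ⟨c, hc⟩
  obtain rfl : a = a' := by
    by_contra hne
    refine hdisj hne (hRpq a hcR) (List.mem_append_right _ ?_)
    simpa only [ha'] using hmem_q a'
  obtain rfl : b = c := congrArg Subtype.val (ha.symm.trans ha')
  exact ⟨a, a.2, hcR⟩

end Grapht

theorem boundary_linked_of_EMCut_general {V : Type u} {E : Type v} (G : Grapht V E)
    {A B X : Set V} (hAX : A ⊆ X) (hX : G.IsEMABCut A B (G.edgeCut X)) :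
    (∃ P, G.IsBoundaryLinkage X A P) ∧
      (G.IsEMABCut A B (G.edgeCut A) → ∃ P, G.IsBoundaryLinkage X A P ∧
        ∀ e ∈ G.edgeCut A, ∃ f ∈ G.edgeCut X, e ∈ (P f).edges) := by
  obtain ⟨P, hP⟩ := hX.exists_isBoundaryLinkage hAX
  refine ⟨⟨P, hP⟩, fun hA => ?_⟩
  obtain ⟨Q, hQ, hQX⟩ := hA.exists_isPathSystemFrom hX.1
  exact hP.exists_covering hQ hAX hQX

/-- If `δ(X t)` is an Erdős–Menger `t(T−t)`-cut with `t ∈ X t`, then `X t` is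
boundary-linked; if moreover `t` is linked, the witnessing system can be chosen to
also cover `δ(t)`. -/
theorem boundary_linked_of_EMCut {V : Type u} {E : Type v} (G : Grapht V E)
    (t : V) (ht : t ∈ G.T) (Xt : Set V) (htX : t ∈ Xt)
    (hEM : G.IsEMABCut {t} (G.T \ {t}) (G.edgeCut Xt)) :
    (∃ Pt : E → G.Path,
      (∀ e ∈ G.edgeCut Xt, ∀ e' ∈ G.edgeCut Xt, e ≠ e' →
        ∀ f, f ∈ (Pt e).edges → f ∉ (Pt e').edges) ∧
      ∀ e ∈ G.edgeCut Xt, (Pt e).edges.head? = some e ∧ (Pt e).last = t) ∧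
    (G.Linked t → ∃ Pt : E → G.Path,
      (∀ e ∈ G.edgeCut Xt, ∀ e' ∈ G.edgeCut Xt, e ≠ e' →
        ∀ f, f ∈ (Pt e).edges → f ∉ (Pt e').edges) ∧
      (∀ e ∈ G.edgeCut Xt, (Pt e).edges.head? = some e ∧ (Pt e).last = t) ∧
      ∀ e ∈ G.edgeCut {t}, ∃ f ∈ G.edgeCut Xt, e ∈ (Pt f).edges) := by
  obtain ⟨⟨P, hP⟩, hcover⟩ :=
    boundary_linked_of_EMCut_general G (Set.singleton_subset_iff.2 htX) hEM
  refine ⟨⟨P, fun _ he _ he' hne _ hf hf' => hP.disjoint he he' hne hf hf',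
    fun e he => ⟨hP.head? e he, hP.last_mem e he⟩⟩, fun hlinked => ?_⟩
  obtain ⟨R, hR, hRt⟩ := hcover (hlinked.isEMABCut ht)
  exact ⟨R, fun _ he _ he' hne _ hf hf' => hR.disjoint he he' hne hf hf',
    fun e he => ⟨hR.head? e he, hR.last_mem e he⟩, hRt⟩
end
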